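/- Let w = x^a y^b x^c y^d, where a, b, c, d are nonzero integers. Then either the family of word maps P_{w,q}: SL(2,q) × SL(2,q) → SL(2,q), with q ranging over all prime powers, is equidistributed, or a = c and b = d, i.e., w = (x^a y^b)^2. -/

import Mathlib

open Matrix Polynomial

abbrev SL2 (K : Type) [CommRing K] : Type := Matrix.SpecialLinearGroup (Fin 2) K

abbrev PSL2 (K : Type) [CommRing K] : Type := SL2 K ⧸ Subgroup.center (SL2 K)

/-- Evaluation of a word `w ∈ F₂` at a pair of group elements. -/
def wordEval {G : Type*} [Group G] (w : FreeGroup (Fin 2)) (g₁ g₂ : G) : G :=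
  (FreeGroup.lift ![g₁, g₂]) w

/-- The word map `P_{w,G} : G × G → G` for `G = SL(2,K)`. -/
def wordMap (w : FreeGroup (Fin 2)) (K : Type) [CommRing K] :
    SL2 K × SL2 K → SL2 K := fun g => wordEval w g.1 g.2

/-- The point `(tr x, tr xy, tr y)`. -/
def trPoint {K : Type} [CommRing K] (x y : SL2 K) : Fin 3 → K :=
  ![Matrix.trace (x : Matrix (Fin 2) (Fin 2) K),
    Matrix.trace ((x * y : SL2 K) : Matrix (Fin 2) (Fin 2) K),
    Matrix.trace (y : Matrix (Fin 2) (Fin 2) K)]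

/-- `f ∈ ℤ[s,u,t]` is the trace polynomial of the word `w`. -/
def IsTracePolynomial (w : FreeGroup (Fin 2)) (f : MvPolynomial (Fin 3) ℤ) : Prop :=
  ∀ (K : Type) [CommRing K], ∀ x y : SL2 K,
    Matrix.trace ((wordEval w x y : SL2 K) : Matrix (Fin 2) (Fin 2) K) =
      MvPolynomial.eval (trPoint x y) (MvPolynomial.map (Int.castRingHom K) f)

/-- `f : X → Y` is `ε`-equidistributed. -/
def IsEquidistributed {X Y : Type*} (f : X → Y) (ε : ℝ) : Prop :=
  ∃ Y' : Set Y,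
    (1 - ε) * (Nat.card Y) < (Nat.card Y' : ℝ) ∧
    ∀ y ∈ Y',
      |(Nat.card {x : X // f x = y} : ℝ) - (Nat.card X : ℝ) / (Nat.card Y)| <
        ε * (Nat.card X) / (Nat.card Y)

/-- The family of word maps on `SL(2,p^n)` is `p`-equidistributed. -/
def IsPEquidistributed (w : FreeGroup (Fin 2)) (p : ℕ) (hp : p.Prime) : Prop :=
  letI : Fact p.Prime := ⟨hp⟩
  ∃ ε : ℕ → ℝ,
    Filter.Tendsto (fun n : ℕ => ε (p ^ n)) Filter.atTop (nhds 0) ∧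
    ∀ᶠ n : ℕ in Filter.atTop,
      IsEquidistributed (wordMap w (GaloisField p n)) (ε (p ^ n))

/-- The family of word maps on `SL(2,q)`, `q` ranging over all prime powers,
is equidistributed. -/
def IsEquidistributedFamily (w : FreeGroup (Fin 2)) : Prop :=
  ∃ ε : ℕ → ℝ,
    Filter.Tendsto ε Filter.atTop (nhds 0) ∧
    ∀ (p : ℕ) (hp : p.Prime),
      letI : Fact p.Prime := ⟨hp⟩
      ∀ᶠ n : ℕ in Filter.atTop,
        IsEquidistributed (wordMap w (GaloisField p n)) (ε (p ^ n))

/-- Reduction of an integral polynomial mod `p`. -/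
noncomputable def reduceMod (p : ℕ) (P : MvPolynomial (Fin 3) ℤ) : MvPolynomial (Fin 3) (ZMod p) :=
  MvPolynomial.map (Int.castRingHom (ZMod p)) P

/-- `P = h ∘ Q` with `deg Q ≥ 1`, `deg h ≥ 2`. -/
def IsCompositePoly (F : Type) [CommRing F] (P : MvPolynomial (Fin 3) F) : Prop :=
  ∃ (Q : MvPolynomial (Fin 3) F) (h : Polynomial F),
    1 ≤ Q.totalDegree ∧ 2 ≤ h.natDegree ∧ P = Polynomial.aeval Q h

def IsPComposite (p : ℕ) (P : MvPolynomial (Fin 3) ℤ) : Prop :=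
  IsCompositePoly (ZMod p) (reduceMod p P)

/-- `h` is a permutation polynomial of every finite extension of `F_p`. -/
def IsPermAllExt (p : ℕ) (h : Polynomial (ZMod p)) : Prop :=
  ∀ (K : Type) [Field K] [Algebra (ZMod p) K] [Finite K],
    Function.Bijective fun z : K => Polynomial.aeval z h

def IsPSpecial (p : ℕ) (P : MvPolynomial (Fin 3) ℤ) : Prop :=
  IsPComposite p P ∧
    ∃ (Q : MvPolynomial (Fin 3) (ZMod p)) (h : Polynomial (ZMod p)),
      1 ≤ Q.totalDegree ∧ 2 ≤ h.natDegree ∧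
      reduceMod p P = Polynomial.aeval Q h ∧ IsPermAllExt p h

def AlmostNoncomposite (P : MvPolynomial (Fin 3) ℤ) : Prop :=
  ∀ p : ℕ, p.Prime → ¬ IsPComposite p P ∨ IsPSpecial p P

/-- The reduced word `x^{a₁}y^{b₁} ⋯ x^{a_r}y^{b_r}`. -/
def wordOf {r : ℕ} (a b : Fin r → ℤ) : FreeGroup (Fin 2) :=
  (List.ofFn fun i : Fin r =>
    FreeGroup.of (0 : Fin 2) ^ a i * FreeGroup.of (1 : Fin 2) ^ b i).prod

/-!
The trace of `w = x ^ a * y ^ b * x ^ c * y ^ d` on `SL(2, K)` is a quadratic polynomial in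
`u = tr (x * y)` whose coefficients depend on `s = tr x` and `t = tr y`. Over a field with `q`
elements, let `S τ` be the number of triples `(s, t, u)` at which it takes the value `τ`. The second
moment of `S` counts solutions `(u, v)` of the equations `f u = g v` between two such quadratics.
This is a nonsingular conic, with at most `q + 2` points, unless the ratio of discriminant to
leading coefficient agrees for `f` and `g`. After multiplication by `(s ^ 2 - 4) * (t ^ 2 - 4)` both
are expressed by Chebyshev polynomials in `s` and `t`, and comparing leading terms shows that the
ratio takes each value `O(q)` times unless `a = c` and `b = d`. Hence almost every `S τ` is close to
`q ^ 2`.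

For most traces `(s, t, u)` the pairs `(x, y)` with these traces number at most about `q ^ 3`: for
fixed `x` they are parametrized by a conic. As there are about `q ^ 6` pairs in all, almost every
trace `τ` is attained by about `q ^ 5` of them. If `τ ^ 2 ≠ 4`, all elements of trace `τ` are
conjugate under `GL(2, K)`, so their fibres under the word map have equal size, which turns
equidistribution of traces into that of elements.
-/

open scoped Finset MatrixGroups

/-! ### Counting points -/

lemma card_filter_prod_eq_sum {α β : Type*} [Fintype α] [Fintype β] (p : α × β → Prop)
    [DecidablePred p] : #{z | p z} = ∑ x, #{y | p (x, y)} := by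
  simp only [Finset.card_filter, ← Finset.univ_product_univ, Finset.sum_product]

lemma card_filter_prod_le {α β : Type*} [Fintype α] [Fintype β]
    (p : α × β → Prop) [DecidablePred p] (B : Finset α) {m : ℕ}
    (h : ∀ x ∉ B, #{y | p (x, y)} ≤ m) :
    #{z | p z} ≤ #B * Fintype.card β + m * Fintype.card α := by
  classical
  calc #{z | p z} = ∑ x, #{y | p (x, y)} := card_filter_prod_eq_sum p
    _ ≤ ∑ x, ((if x ∈ B then Fintype.card β else 0) + m) := by
      refine Finset.sum_le_sum fun x _ => ?_
      split_ifs with hx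
      · exact (Finset.card_le_univ _).trans (Nat.le_add_right _ _)
      · exact (h x hx).trans (Nat.le_add_left _ _)
    _ = #B * Fintype.card β + m * Fintype.card α := by
      simp [Finset.sum_add_distrib, mul_comm]

lemma sum_card_fiber_mul_card_fiber {α β γ : Type*} [Fintype α] [Fintype β] [Fintype γ]
    [DecidableEq γ] (f : α → γ) (g : β → γ) :
    ∑ c, #{x | f x = c} * #{y | g y = c} = #{z : α × β | f z.1 = g z.2} := by
  rw [Finset.card_eq_sum_card_fiberwise (f := fun z => g z.2) (t := Finset.univ)
    fun _ _ => Finset.mem_coe.mpr (Finset.mem_univ _)]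
  refine Finset.sum_congr rfl fun c _ => ?_
  rw [← Finset.card_product]
  congr 1
  ext z
  simp only [Finset.mem_product, Finset.mem_filter, Finset.mem_univ, true_and]
  exact and_congr_left fun h => by rw [h]

section Roots

variable {K : Type*} [Field K] [Fintype K] [DecidableEq K]

lemma card_eval_eq_zero_le {P : K[X]} (hP : P ≠ 0) : #{z | P.eval z = 0} ≤ P.natDegree := by
  refine card_le_degree_of_subset_roots fun z hz => ?_
  simpa [hP] using hz

lemma card_quadratic_le_two {A B : K} (C : K) (h : A ≠ 0 ∨ B ≠ 0) :
    #{z | A * z ^ 2 + B * z + C = 0} ≤ 2 := by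
  set P : K[X] := Polynomial.C A * X ^ 2 + Polynomial.C B * X + Polynomial.C C with hP
  have P_ne_zero : P ≠ 0 := by
    intro h0
    have coeff_two : P.coeff 2 = A := by simp [hP]
    have coeff_one : P.coeff 1 = B := by simp [hP]
    rw [h0, coeff_zero] at coeff_two coeff_one
    exact h.elim (absurd coeff_two.symm) (absurd coeff_one.symm)
  simpa [hP] using (card_eval_eq_zero_le P_ne_zero).trans natDegree_quadratic_le

/-- A line through the origin meets the conic in at most one further point. -/
lemma card_conic_through_zero_le (A B C D E : K) (h : B * D * E - A * E ^ 2 - C * D ^ 2 ≠ 0) :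
    #{z : K × K | A * z.1 ^ 2 + B * z.1 * z.2 + C * z.2 ^ 2 + D * z.1 + E * z.2 = 0} ≤
      Fintype.card K + 2 := by
  set conic : Finset (K × K) :=
    {z | A * z.1 ^ 2 + B * z.1 * z.2 + C * z.2 ^ 2 + D * z.1 + E * z.2 = 0} with hconic
  have off_axis : #{z ∈ conic | z.1 ≠ 0} ≤ Fintype.card K := by
    refine Finset.card_le_card_of_injOn (fun z => z.2 / z.1) (fun _ _ => Finset.mem_univ _) ?_
    rintro ⟨x, y⟩ hz ⟨x', y'⟩ hz' (slope_eq : y / x = y' / x')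
    simp only [hconic, Finset.coe_filter, Finset.mem_filter, Finset.mem_univ, true_and,
      Set.mem_ofPred_eq] at hz hz'
    obtain ⟨⟨on_conic, hx⟩, ⟨on_conic', hx'⟩⟩ := And.intro hz hz'
    obtain ⟨m, rfl⟩ : ∃ m, y = m * x := ⟨y / x, (div_mul_cancel₀ y hx).symm⟩
    obtain rfl : y' = m * x' := by
      rw [mul_div_cancel_right₀ _ hx] at slope_eq
      rw [slope_eq, div_mul_cancel₀ _ hx']
    have on_line : (A + B * m + C * m ^ 2) * x + (D + E * m) = 0 :=
      mul_left_cancel₀ hx (by linear_combination on_conic)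
    have on_line' : (A + B * m + C * m ^ 2) * x' + (D + E * m) = 0 :=
      mul_left_cancel₀ hx' (by linear_combination on_conic')
    have slope_ne : A + B * m + C * m ^ 2 ≠ 0 := by
      intro h0
      rw [h0, zero_mul, zero_add] at on_line
      exact h (by linear_combination (B * E - C * (D - E * m)) * on_line - E ^ 2 * h0)
    obtain rfl : x = x' := mul_left_cancel₀ slope_ne (by linear_combination on_line - on_line')
    rfl
  have on_axis : #{z ∈ conic | ¬z.1 ≠ 0} ≤ 2 := by
    have hCE : C ≠ 0 ∨ E ≠ 0 := by
      contrapose! h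
      simp [h]
    refine (Finset.card_le_card_of_injOn Prod.snd ?_ ?_).trans (card_quadratic_le_two 0 hCE)
    all_goals simp only [hconic, not_not, Set.MapsTo, Set.InjOn, Finset.coe_filter,
      Finset.mem_filter, Finset.mem_univ, true_and, Set.mem_ofPred_eq]
    · rintro ⟨x, y⟩ ⟨on_conic, rfl : x = 0⟩
      linear_combination on_conic
    · rintro ⟨x, y⟩ ⟨-, rfl : x = 0⟩ ⟨x', y'⟩ ⟨-, rfl : x' = 0⟩ (rfl : y = y')
      rfl
  rw [← Finset.card_filter_add_card_filter_not fun z : K × K => z.1 ≠ 0]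
  exact Nat.add_le_add off_axis on_axis

lemma card_conic_le (A B C D E F : K)
    (h : 4 * A * C * F + B * D * E - A * E ^ 2 - C * D ^ 2 - F * B ^ 2 ≠ 0) :
    #{z : K × K | A * z.1 ^ 2 + B * z.1 * z.2 + C * z.2 ^ 2 + D * z.1 + E * z.2 + F = 0} ≤
      Fintype.card K + 2 := by
  set conic : Finset (K × K) :=
    {z | A * z.1 ^ 2 + B * z.1 * z.2 + C * z.2 ^ 2 + D * z.1 + E * z.2 + F = 0} with hconic
  rcases conic.eq_empty_or_nonempty with hempty | ⟨⟨x, y⟩, hxy⟩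
  · simp [hempty]
  have on_conic : A * x ^ 2 + B * x * y + C * y ^ 2 + D * x + E * y + F = 0 := by
    simpa [hconic] using hxy
  have translated := card_conic_through_zero_le A B C (2 * A * x + B * y + D)
    (B * x + 2 * C * y + E) <| by
      convert h using 1
      linear_combination (B ^ 2 - 4 * A * C) * on_conic
  refine (Finset.card_le_card_of_injOn (fun z => (z.1 - x, z.2 - y)) (fun z hz => ?_) ?_).trans
    translated
  · simp only [hconic, Finset.coe_filter, Finset.mem_univ, true_and, Set.mem_ofPred_eq] at hz ⊢
    linear_combination hz - on_conic
  · rintro ⟨z₁, z₂⟩ - ⟨w₁, w₂⟩ - hzw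
    simpa using hzw

lemma card_quadratic_eq_quadratic_le {A B C A' B' C' : K}
    (h : discrim A B C * A' ≠ discrim A' B' C' * A) :
    #{z : K × K | A * z.1 ^ 2 + B * z.1 + C = A' * z.2 ^ 2 + B' * z.2 + C'} ≤
      Fintype.card K + 2 := by
  have conic := card_conic_le A 0 (-A') B (-B') (C - C') <| by
    rw [discrim, discrim] at h
    contrapose! h
    linear_combination h
  refine (Finset.card_le_card (Finset.monotone_filter_right _ fun z _ hz => ?_)).trans conic
  linear_combination hz

lemma card_quadratic_family_le {A : K} (hA : A ≠ 0) (B C : K → K) :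
    #{z : K × K | A * z.1 ^ 2 + B z.2 * z.1 + C z.2 = 0} ≤ 2 * Fintype.card K := by
  have slice (y : K) : #{x | A * x ^ 2 + B y * x + C y = 0} ≤ 2 :=
    card_quadratic_le_two (C y) (Or.inl hA)
  have swapped := card_filter_prod_le
    (fun z : K × K => A * z.2 ^ 2 + B z.1 * z.2 + C z.1 = 0) ∅ fun y _ => slice y
  rw [Finset.card_empty, zero_mul, zero_add] at swapped
  refine (Finset.card_equiv (Equiv.prodComm K K) fun z => ?_).trans_le swapped
  simp

lemma sum_sq_sum_card_quadratic_fiber_le {ι : Type*} (I : Finset ι) (A B C : ι → K) {m : ℕ}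
    (hA : ∀ i ∈ I, A i ≠ 0)
    (hm : ∀ κ, #{i ∈ I | discrim (A i) (B i) (C i) = κ * A i} ≤ m) :
    ∑ τ, (∑ i ∈ I, #{u | A i * u ^ 2 + B i * u + C i = τ}) ^ 2 ≤
      #I ^ 2 * (Fintype.card K + 2) + 2 * Fintype.card K * m * #I := by
  set q := Fintype.card K
  let IsDegenerate (i j : ι) : Prop :=
    discrim (A i) (B i) (C i) * A j = discrim (A j) (B j) (C j) * A i
  have card_degenerate (i : ι) (hi : i ∈ I) : #{j ∈ I | IsDegenerate i j} ≤ m := by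
    refine le_trans (Finset.card_le_card (Finset.monotone_filter_right _ fun j _ hj => ?_))
      (hm (discrim (A i) (B i) (C i) / A i))
    have := hA i hi
    field_simp
    exact Eq.symm hj
  have card_pair (i j : ι) (hi : i ∈ I) :
      #{z : K × K | A i * z.1 ^ 2 + B i * z.1 + C i = A j * z.2 ^ 2 + B j * z.2 + C j} ≤
        q + 2 + if IsDegenerate i j then 2 * q else 0 := by
    split_ifs with h
    · have family := card_quadratic_family_le (hA i hi) (fun _ => B i)
        fun y => C i - (A j * y ^ 2 + B j * y + C j)
      simp only [← add_sub_assoc, sub_eq_zero] at family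
      exact family.trans (Nat.le_add_left _ _)
    · exact card_quadratic_eq_quadratic_le h
  calc ∑ τ, (∑ i ∈ I, #{u | A i * u ^ 2 + B i * u + C i = τ}) ^ 2
      = ∑ i ∈ I, ∑ j ∈ I,
          #{z : K × K | A i * z.1 ^ 2 + B i * z.1 + C i = A j * z.2 ^ 2 + B j * z.2 + C j} := by
        simp only [sq (Finset.sum _ _), Finset.sum_mul_sum]
        rw [Finset.sum_comm]
        refine Finset.sum_congr rfl fun i _ => ?_
        rw [Finset.sum_comm]
        exact Finset.sum_congr rfl fun j _ => sum_card_fiber_mul_card_fiber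
          (fun x => A i * x ^ 2 + B i * x + C i) fun y => A j * y ^ 2 + B j * y + C j
    _ ≤ ∑ i ∈ I, ∑ j ∈ I, (q + 2 + if IsDegenerate i j then 2 * q else 0) :=
        Finset.sum_le_sum fun i hi => Finset.sum_le_sum fun j _ => card_pair i j hi
    _ = ∑ i ∈ I, (#I * (q + 2) + #{j ∈ I | IsDegenerate i j} * (2 * q)) := by
        simp [Finset.sum_add_distrib, Finset.sum_ite]
    _ ≤ ∑ i ∈ I, (#I * (q + 2) + m * (2 * q)) := by
        gcongr with i hi
        exact card_degenerate i hi
    _ = #I ^ 2 * (q + 2) + 2 * q * m * #I := by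
        rw [Finset.sum_const, smul_eq_mul]
        ring

end Roots

/-! ### Powers and traces in `SL(2, K)` -/

open Polynomial.Chebyshev in
/-- The coefficient of `x` in the Cayley–Hamilton expansion
`x ^ n = zpowCoeff₁ n (tr x) • x + zpowCoeff₀ n (tr x) • 1` of a power of `x ∈ SL(2, K)`. -/
noncomputable def zpowCoeff₁ {K : Type*} [CommRing K] (n : ℤ) (s : K) : K :=
  (S K (n - 1)).eval s

open Polynomial.Chebyshev in
/-- The coefficient of `1` in the Cayley–Hamilton expansion
`x ^ n = zpowCoeff₁ n (tr x) • x + zpowCoeff₀ n (tr x) • 1` of a power of `x ∈ SL(2, K)`. -/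
noncomputable def zpowCoeff₀ {K : Type*} [CommRing K] (n : ℤ) (s : K) : K :=
  -(S K (n - 2)).eval s

open Polynomial.Chebyshev in
/-- The trace of the `n`-th power of an element of `SL(2, K)` of trace `s`. -/
noncomputable def zpowTrace {K : Type*} [CommRing K] (n : ℤ) (s : K) : K :=
  (C K n).eval s

section Chebyshev

variable {K : Type*} [CommRing K]

lemma zpowCoeff₁_zero (s : K) : zpowCoeff₁ 0 s = 0 := by simp [zpowCoeff₁]

lemma zpowCoeff₀_zero (s : K) : zpowCoeff₀ 0 s = 1 := by simp [zpowCoeff₀]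

lemma zpowCoeff₁_add_one (n : ℤ) (s : K) :
    zpowCoeff₁ (n + 1) s = s * zpowCoeff₁ n s + zpowCoeff₀ n s := by
  simp [zpowCoeff₁, zpowCoeff₀, Chebyshev.S_eq K n, sub_eq_add_neg]

lemma zpowCoeff₀_add_one (n : ℤ) (s : K) : zpowCoeff₀ (n + 1) s = -zpowCoeff₁ n s := by
  rw [zpowCoeff₀, zpowCoeff₁, show n + 1 - 2 = n - 1 by ring]

lemma zpowCoeff₁_sub_one (n : ℤ) (s : K) : zpowCoeff₁ (n - 1) s = -zpowCoeff₀ n s := by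
  rw [zpowCoeff₀, zpowCoeff₁, neg_neg, sub_sub, one_add_one_eq_two]

lemma zpowCoeff₀_sub_one (n : ℤ) (s : K) :
    zpowCoeff₀ (n - 1) s = zpowCoeff₁ n s + s * zpowCoeff₀ n s := by
  have h := zpowCoeff₁_add_one (n - 1) s
  rw [sub_add_cancel, zpowCoeff₁_sub_one] at h
  linear_combination -h

lemma zpowCoeff₁_neg (n : ℤ) (s : K) : zpowCoeff₁ (-n) s = -zpowCoeff₁ n s := by
  simp [zpowCoeff₁, Chebyshev.S_neg_sub_one]

lemma zpowCoeff₀_neg (n : ℤ) (s : K) :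
    zpowCoeff₀ (-n) s = s * zpowCoeff₁ n s + zpowCoeff₀ n s := by
  rw [← zpowCoeff₁_add_one]
  simp [zpowCoeff₁, zpowCoeff₀, Chebyshev.S_neg_sub_two]

/-- The norm relation `det (x ^ n) = 1`. -/
lemma zpowCoeff_norm (n : ℤ) (s : K) :
    zpowCoeff₁ n s ^ 2 + zpowCoeff₁ n s * zpowCoeff₀ n s * s + zpowCoeff₀ n s ^ 2 = 1 := by
  have h := congrArg (eval s) (Chebyshev.S_sq_add_S_sq K (n - 2))
  rw [show n - 2 + 1 = n - 1 by ring] at h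
  simp only [eval_sub, eval_add, eval_mul, eval_pow, eval_X, eval_one] at h
  simp only [zpowCoeff₁, zpowCoeff₀]
  linear_combination h

lemma zpowTrace_eq (n : ℤ) (s : K) :
    zpowTrace n s = s * zpowCoeff₁ n s + 2 * zpowCoeff₀ n s := by
  rw [zpowTrace, Chebyshev.C_eq_S_sub_X_mul_S, Chebyshev.S_eq, zpowCoeff₁, zpowCoeff₀]
  simp only [eval_sub, eval_mul, eval_X, eval_ofNat]
  ring

lemma zpowCoeff_add (m n : ℤ) (s : K) :
    zpowCoeff₁ (m + n) s = s * zpowCoeff₁ m s * zpowCoeff₁ n s + zpowCoeff₁ m s * zpowCoeff₀ n s +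
        zpowCoeff₀ m s * zpowCoeff₁ n s ∧
      zpowCoeff₀ (m + n) s =
        zpowCoeff₀ m s * zpowCoeff₀ n s - zpowCoeff₁ m s * zpowCoeff₁ n s := by
  induction n using Int.induction_on with
  | zero => simp [zpowCoeff₁_zero, zpowCoeff₀_zero]
  | succ k ih =>
    rw [← add_assoc]
    simp only [zpowCoeff₁_add_one, zpowCoeff₀_add_one, ih]
    constructor <;> ring
  | pred k ih =>
    rw [← add_sub_assoc]
    simp only [zpowCoeff₁_sub_one, zpowCoeff₀_sub_one, ih]
    constructor <;> ring

lemma zpowTrace_add (m n : ℤ) (s : K) :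
    zpowTrace (m + n) s = (s ^ 2 - 2) * zpowCoeff₁ m s * zpowCoeff₁ n s +
      s * (zpowCoeff₁ m s * zpowCoeff₀ n s + zpowCoeff₀ m s * zpowCoeff₁ n s) +
      2 * zpowCoeff₀ m s * zpowCoeff₀ n s := by
  rw [zpowTrace_eq, (zpowCoeff_add m n s).1, (zpowCoeff_add m n s).2]
  ring

lemma zpowTrace_sub (m n : ℤ) (s : K) :
    zpowTrace (m - n) s = 2 * zpowCoeff₁ m s * zpowCoeff₁ n s +
      s * (zpowCoeff₁ m s * zpowCoeff₀ n s + zpowCoeff₀ m s * zpowCoeff₁ n s) +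
      2 * zpowCoeff₀ m s * zpowCoeff₀ n s := by
  rw [sub_eq_add_neg, zpowTrace_add, zpowCoeff₁_neg, zpowCoeff₀_neg]
  ring

lemma zpowTrace_add_sub_zpowTrace_sub (m n : ℤ) (s : K) :
    zpowTrace (m + n) s - zpowTrace (m - n) s =
      (s ^ 2 - 4) * (zpowCoeff₁ m s * zpowCoeff₁ n s) := by
  rw [zpowTrace_add, zpowTrace_sub]
  ring

end Chebyshev

section SpecialLinear

variable {K : Type*} [CommRing K]

/-- The trace of an element of `SL(2, K)`, named for use on products without coercions. -/
def tr (x : SL(2, K)) : K := (x : Matrix (Fin 2) (Fin 2) K).trace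

lemma tr_eq (x : SL(2, K)) : tr x = x 0 0 + x 1 1 := trace_fin_two _

lemma tr_one : tr (1 : SL(2, K)) = 2 := by
  rw [tr_eq]
  norm_num

lemma tr_mul (x y : SL(2, K)) :
    tr (x * y) = x 0 0 * y 0 0 + x 0 1 * y 1 0 + (x 1 0 * y 0 1 + x 1 1 * y 1 1) := by
  simp [tr_eq, Matrix.mul_apply]

lemma tr_mul_comm (x y : SL(2, K)) : tr (x * y) = tr (y * x) := by
  rw [tr_mul, tr_mul]
  ring

lemma tr_mul_add_tr_inv_mul (x y : SL(2, K)) : tr (x * y) + tr (x⁻¹ * y) = tr x * tr y := by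
  rw [tr_mul, tr_mul, tr_eq, tr_eq, SpecialLinearGroup.SL2_inv_expl]
  simp only [cons_val', cons_val_zero, cons_val_one, cons_val_fin_one]
  ring

lemma tr_zpow_mul (x z : SL(2, K)) (n : ℤ) :
    tr (x ^ n * z) = zpowCoeff₁ n (tr x) * tr (x * z) + zpowCoeff₀ n (tr x) * tr z := by
  induction n using Int.induction_on generalizing z with
  | zero => simp [zpowCoeff₁_zero, zpowCoeff₀_zero]
  | succ k ih =>
    have h := tr_mul_add_tr_inv_mul x (x * z)
    rw [inv_mul_cancel_left] at h
    rw [_root_.zpow_add_one, mul_assoc, ih, zpowCoeff₁_add_one, zpowCoeff₀_add_one]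
    linear_combination zpowCoeff₁ k (tr x) * h
  | pred k ih =>
    have h := tr_mul_add_tr_inv_mul x z
    rw [_root_.zpow_sub_one, mul_assoc, ih, mul_inv_cancel_left, zpowCoeff₁_sub_one,
      zpowCoeff₀_sub_one]
    linear_combination zpowCoeff₀ (-k) (tr x) * h

lemma tr_mul_zpow_mul (w x z : SL(2, K)) (n : ℤ) :
    tr (w * x ^ n * z) =
      zpowCoeff₁ n (tr x) * tr (w * x * z) + zpowCoeff₀ n (tr x) * tr (w * z) := by
  have cyclic (v : SL(2, K)) : tr (w * v * z) = tr (v * (z * w)) := by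
    rw [mul_assoc, tr_mul_comm, mul_assoc]
  rw [cyclic, cyclic, tr_zpow_mul, tr_mul_comm z]

lemma tr_zpow (x : SL(2, K)) (n : ℤ) : tr (x ^ n) = zpowTrace n (tr x) := by
  have h := tr_zpow_mul x 1 n
  rw [mul_one, mul_one, tr_one] at h
  rw [h, zpowTrace_eq]
  ring

lemma tr_zpow_mul_mul_zpow_mul (x y : SL(2, K)) (a c : ℤ) :
    tr (x ^ a * y * x ^ c * y) =
      tr (x ^ a * y) * tr (x ^ c * y) - zpowTrace (a - c) (tr x) := by
  have h := tr_mul_add_tr_inv_mul (x ^ c * y) (x ^ a * y)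
  have hinv : tr ((x ^ c * y)⁻¹ * (x ^ a * y)) = zpowTrace (a - c) (tr x) := by
    rw [_root_.mul_inv_rev, mul_assoc, tr_mul_comm, mul_assoc, mul_assoc, mul_inv_cancel, mul_one,
      ← _root_.zpow_neg, ← _root_.zpow_add, tr_zpow, neg_add_eq_sub]
  rw [mul_assoc (x ^ a * y), tr_mul_comm]
  linear_combination h - hinv

/-- The word `x ^ a * y ^ b * x ^ c * y ^ d` as a map on pairs of elements of a group. -/
def complexityTwoMap {G : Type*} [Group G] (a b c d : ℤ) (z : G × G) : G :=
  z.1 ^ a * z.2 ^ b * z.1 ^ c * z.2 ^ d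

/-- The length of the word `x ^ a * y ^ b * x ^ c * y ^ d`. -/
def wordLength (a b c d : ℤ) : ℕ := a.natAbs + b.natAbs + c.natAbs + d.natAbs

/-- The coefficient of `u ^ 2` in the trace polynomial of `x ^ a * y ^ b * x ^ c * y ^ d`,
where `s, t, u` are the traces of `x, y, x * y`. -/
noncomputable def traceCoeff₂ (a b c d : ℤ) (s t : K) : K :=
  zpowCoeff₁ a s * zpowCoeff₁ c s * (zpowCoeff₁ b t * zpowCoeff₁ d t)

/-- The coefficient of `u` in the trace polynomial of `x ^ a * y ^ b * x ^ c * y ^ d`,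
where `s, t, u` are the traces of `x, y, x * y`. -/
noncomputable def traceCoeff₁ (a b c d : ℤ) (s t : K) : K :=
  zpowCoeff₁ b t * zpowCoeff₁ d t * t *
      (zpowCoeff₁ a s * zpowCoeff₀ c s + zpowCoeff₀ a s * zpowCoeff₁ c s) +
    (zpowCoeff₁ b t * zpowCoeff₀ d t + zpowCoeff₀ b t * zpowCoeff₁ d t) * zpowCoeff₁ (a + c) s

/-- The constant coefficient, as a polynomial in `u`, of the trace polynomial of
`x ^ a * y ^ b * x ^ c * y ^ d`, where `s, t, u` are the traces of `x, y, x * y`. -/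
noncomputable def traceCoeff₀ (a b c d : ℤ) (s t : K) : K :=
  zpowCoeff₁ b t * zpowCoeff₁ d t *
      (t ^ 2 * zpowCoeff₀ a s * zpowCoeff₀ c s - zpowTrace (a - c) s) +
    (zpowCoeff₁ b t * zpowCoeff₀ d t + zpowCoeff₀ b t * zpowCoeff₁ d t) * t *
      zpowCoeff₀ (a + c) s +
    zpowCoeff₀ b t * zpowCoeff₀ d t * zpowTrace (a + c) s

lemma tr_complexityTwoMap (a b c d : ℤ) (x y : SL(2, K)) :
    tr (complexityTwoMap a b c d (x, y)) =
      traceCoeff₂ a b c d (tr x) (tr y) * tr (x * y) ^ 2 +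
        traceCoeff₁ a b c d (tr x) (tr y) * tr (x * y) + traceCoeff₀ a b c d (tr x) (tr y) := by
  have key (m : ℤ) : tr (x ^ m * y) =
      zpowCoeff₁ m (tr x) * tr (x * y) + zpowCoeff₀ m (tr x) * tr y := tr_zpow_mul x y m
  have one_syllable : tr (x ^ a * y * x ^ c) = tr (x ^ (a + c) * y) := by
    rw [tr_mul_comm, ← mul_assoc, ← _root_.zpow_add, add_comm]
  have two_syllables := tr_zpow_mul_mul_zpow_mul x y a c
  rw [complexityTwoMap, ← mul_one (_ * y ^ d), tr_mul_zpow_mul, mul_one, mul_one, mul_assoc _ _ y,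
    tr_mul_zpow_mul, tr_mul_zpow_mul, ← mul_assoc, ← mul_assoc, one_syllable, two_syllables,
    ← _root_.zpow_add, tr_zpow, key, key, key]
  rw [traceCoeff₂, traceCoeff₁, traceCoeff₀]
  ring

/-- The discriminant of the trace polynomial `u ↦ traceCoeff₂ * u ^ 2 + traceCoeff₁ * u +
traceCoeff₀`, up to the factor `(s ^ 2 - 4) * (t ^ 2 - 4)`. -/
noncomputable def traceDiscrim (a b c d : ℤ) (s t : K) : K :=
  (zpowTrace (a + c) s * zpowTrace (b - d) t + zpowTrace (a - c) s * zpowTrace (b + d) t -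
      zpowTrace (a - c) s * zpowTrace (b - d) t) ^ 2 -
    4 * (zpowTrace (a + c) s ^ 2 + zpowTrace (b + d) t ^ 2 - 4)

/-- The leading coefficient `traceCoeff₂`, up to the factor `(s ^ 2 - 4) * (t ^ 2 - 4)`. -/
noncomputable def traceLeading (a b c d : ℤ) (s t : K) : K :=
  (zpowTrace (a + c) s - zpowTrace (a - c) s) * (zpowTrace (b + d) t - zpowTrace (b - d) t)

lemma mul_traceCoeff₂ (a b c d : ℤ) (s t : K) :
    (s ^ 2 - 4) * (t ^ 2 - 4) * traceCoeff₂ a b c d s t = traceLeading a b c d s t := by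
  rw [traceLeading, zpowTrace_add_sub_zpowTrace_sub, zpowTrace_add_sub_zpowTrace_sub, traceCoeff₂]
  ring

lemma wordLength_swap (a b c d : ℤ) : wordLength a b c d = wordLength b a d c := by
  rw [wordLength, wordLength]
  ring

lemma traceDiscrim_swap (a b c d : ℤ) (s t : K) :
    traceDiscrim a b c d s t = traceDiscrim b a d c t s := by
  rw [traceDiscrim, traceDiscrim]
  ring

lemma traceLeading_swap (a b c d : ℤ) (s t : K) :
    traceLeading a b c d s t = traceLeading b a d c t s :=
  mul_comm _ _

/-- Both sides are quadratic forms in each of the four pairs `(zpowCoeff₁ m, zpowCoeff₀ m)`,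
`m = a, b, c, d`, once the constants are multiplied by the norms of the pairs, which are `1`. -/
lemma mul_discrim_traceCoeff (a b c d : ℤ) (s t : K) :
    (s ^ 2 - 4) * (t ^ 2 - 4) *
        discrim (traceCoeff₂ a b c d s t) (traceCoeff₁ a b c d s t) (traceCoeff₀ a b c d s t) =
      traceDiscrim a b c d s t := by
  set N := (zpowCoeff₁ a s ^ 2 + zpowCoeff₁ a s * zpowCoeff₀ a s * s + zpowCoeff₀ a s ^ 2) *
    (zpowCoeff₁ c s ^ 2 + zpowCoeff₁ c s * zpowCoeff₀ c s * s + zpowCoeff₀ c s ^ 2) with hN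
  set M := (zpowCoeff₁ b t ^ 2 + zpowCoeff₁ b t * zpowCoeff₀ b t * t + zpowCoeff₀ b t ^ 2) *
    (zpowCoeff₁ d t ^ 2 + zpowCoeff₁ d t * zpowCoeff₀ d t * t + zpowCoeff₀ d t ^ 2) with hM
  have N_eq_one : N = 1 := by rw [hN, zpowCoeff_norm, zpowCoeff_norm, one_mul]
  have M_eq_one : M = 1 := by rw [hM, zpowCoeff_norm, zpowCoeff_norm, one_mul]
  have homogeneous : traceDiscrim a b c d s t =
      (zpowTrace (a + c) s * zpowTrace (b - d) t + zpowTrace (a - c) s * zpowTrace (b + d) t -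
        zpowTrace (a - c) s * zpowTrace (b - d) t) ^ 2 -
      4 * (zpowTrace (a + c) s ^ 2 * M + zpowTrace (b + d) t ^ 2 * N - 4 * (N * M)) := by
    rw [traceDiscrim, N_eq_one, M_eq_one]
    ring
  rw [homogeneous, hN, hM, discrim, traceCoeff₂, traceCoeff₁, traceCoeff₀, zpowTrace_add,
    zpowTrace_add, zpowTrace_sub, zpowTrace_sub, (zpowCoeff_add a c s).1, (zpowCoeff_add a c s).2]
  ring

end SpecialLinear

/-! ### Degenerate pairs of traces -/

section ChebyshevDegree

variable {K : Type*} [CommRing K] [Nontrivial K]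

lemma isMonicOfDegree_chebyshevC_natCast (n : ℕ) :
    IsMonicOfDegree (Chebyshev.C K (n + 1)) (n + 1) := by
  induction n using Nat.strong_induction_on with
  | _ n ih =>
    match n with
    | 0 => simpa using isMonicOfDegree_X K
    | 1 =>
      simpa [one_add_one_eq_two, Chebyshev.C_two, sub_eq_add_neg, -map_neg, ← C_ofNat,
        ← C_neg] using isMonicOfDegree_add_add_two (0 : K) (-2)
    | n + 2 =>
      have recursion := Chebyshev.C_add_two K (n + 1)
      push_cast
      rw [add_right_comm, recursion, add_assoc (n : ℤ), one_add_one_eq_two]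
      have h1 := ih (n + 1) (by lia)
      have h0 := ih n (by lia)
      push_cast at h1
      rw [add_assoc, one_add_one_eq_two] at h1
      rw [show n + 2 + 1 = 1 + (n + 2) by ring]
      exact ((isMonicOfDegree_X K).mul h1).sub (by rw [h0.natDegree_eq]; lia)

lemma isMonicOfDegree_chebyshevC {n : ℤ} (hn : n ≠ 0) :
    IsMonicOfDegree (Chebyshev.C K n) n.natAbs := by
  rw [← Chebyshev.C_natAbs, ← Nat.sub_add_cancel (Int.natAbs_pos.mpr hn)]
  exact_mod_cast isMonicOfDegree_chebyshevC_natCast (K := K) (n.natAbs - 1)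

lemma natDegree_chebyshevC_le (n : ℤ) : (Chebyshev.C K n).natDegree ≤ n.natAbs := by
  rcases eq_or_ne n 0 with rfl | hn
  · simp [← C_ofNat]
  · exact (isMonicOfDegree_chebyshevC hn).natDegree_eq.le

lemma coeff_chebyshevC_add_sub {m n : ℤ} (hm : m ≠ 0) (hn : n ≠ 0) :
    letI N := m.natAbs + n.natAbs
    ((Chebyshev.C K (m + n)).coeff N = 1 ∧ (Chebyshev.C K (m - n)).coeff N = 0) ∨
      ((Chebyshev.C K (m + n)).coeff N = 0 ∧ (Chebyshev.C K (m - n)).coeff N = 1) := by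
  have coeff_eq_one {k : ℤ} (hk : k.natAbs = m.natAbs + n.natAbs) :
      (Chebyshev.C K k).coeff (m.natAbs + n.natAbs) = 1 := by
    rw [← hk]
    exact ((isMonicOfDegree_iff _ _).mp (isMonicOfDegree_chebyshevC (by lia))).2
  have coeff_eq_zero {k : ℤ} (hk : k.natAbs < m.natAbs + n.natAbs) :
      (Chebyshev.C K k).coeff (m.natAbs + n.natAbs) = 0 :=
    coeff_eq_zero_of_natDegree_lt ((natDegree_chebyshevC_le k).trans_lt hk)
  rcases lt_or_ge (m - n).natAbs (m.natAbs + n.natAbs) with h | h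
  · exact .inl ⟨coeff_eq_one (by lia), coeff_eq_zero h⟩
  · exact .inr ⟨coeff_eq_zero (by lia), coeff_eq_one (by lia)⟩

lemma natDegree_chebyshevC_add_le (m n : ℤ) :
    (Chebyshev.C K (m + n)).natDegree ≤ m.natAbs + n.natAbs :=
  (natDegree_chebyshevC_le _).trans (Int.natAbs_add_le m n)

lemma natDegree_chebyshevC_sub_le (m n : ℤ) :
    (Chebyshev.C K (m - n)).natDegree ≤ m.natAbs + n.natAbs :=
  (natDegree_chebyshevC_le _).trans (Int.natAbs_sub_le m n)

end ChebyshevDegree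

section Resonance

variable {K : Type*} [Field K] [Fintype K] [DecidableEq K]

lemma card_zpowTrace_add_eq_zpowTrace_sub_le {m n : ℤ} (hm : m ≠ 0) (hn : n ≠ 0) :
    #{s : K | zpowTrace (m + n) s = zpowTrace (m - n) s} ≤ m.natAbs + n.natAbs := by
  set P : K[X] := Chebyshev.C K (m + n) - Chebyshev.C K (m - n) with hP
  have P_ne_zero : P ≠ 0 := by
    intro h0
    have h := coeff_chebyshevC_add_sub (K := K) hm hn
    rw [sub_eq_zero.mp h0] at h
    rcases h with ⟨h1, h0⟩ | ⟨h0, h1⟩ <;> exact one_ne_zero (h1.symm.trans h0)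
  have degree_le : P.natDegree ≤ m.natAbs + n.natAbs :=
    (natDegree_sub_le_of_le (natDegree_chebyshevC_add_le m n)
      (natDegree_chebyshevC_sub_le m n)).trans (max_self _).le
  refine (Finset.card_le_card (Finset.monotone_filter_right _ fun s _ hs => ?_)).trans
    ((card_eval_eq_zero_le P_ne_zero).trans degree_le)
  rwa [hP, eval_sub, sub_eq_zero]

lemma card_zpowTrace_sq_eq_four_le {n : ℤ} (hn : n ≠ 0) :
    #{s : K | zpowTrace n s ^ 2 = 4} ≤ 2 * n.natAbs := by
  have monic : IsMonicOfDegree (Chebyshev.C K n ^ 2 - C 4) (n.natAbs * 2) :=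
    ((isMonicOfDegree_chebyshevC hn).pow 2).sub (by rw [natDegree_C]; lia)
  have h := card_eval_eq_zero_le monic.ne_zero
  rw [monic.natDegree_eq, mul_comm] at h
  refine (Finset.card_le_card (Finset.monotone_filter_right _ fun s _ hs => ?_)).trans h
  rwa [eval_sub, eval_pow, eval_C, sub_eq_zero]

lemma card_sq_eval_sub_mul_sq_eval_eq_le {P Q R : K[X]} {κ : K} {N : ℕ} (hP : P.natDegree ≤ N)
    (hQ : Q.natDegree ≤ N) (hR : R.natDegree < 2 * N) (h : P.coeff N ^ 2 - κ * Q.coeff N ^ 2 ≠ 0) :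
    #{t | P.eval t ^ 2 - κ * Q.eval t ^ 2 = R.eval t} ≤ 2 * N := by
  set F : K[X] := P ^ 2 - C κ * Q ^ 2 - R with hF
  have degree_le : F.natDegree ≤ 2 * N := by
    rw [hF]
    compute_degree!
    lia
  have F_ne_zero : F ≠ 0 := by
    intro h0
    have coeff_F := coeff_zero (R := K) (2 * N)
    rw [← h0, hF, coeff_sub, coeff_sub, coeff_C_mul, coeff_pow_of_natDegree_le hP,
      coeff_pow_of_natDegree_le hQ, coeff_eq_zero_of_natDegree_lt hR, sub_zero] at coeff_F
    exact h coeff_F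
  refine (Finset.card_le_card (Finset.monotone_filter_right _ fun t _ ht => ?_)).trans
    ((card_eval_eq_zero_le F_ne_zero).trans degree_le)
  rw [hF, eval_sub, eval_sub, eval_mul, eval_pow, eval_pow, eval_C, ht, sub_self]

/-- The equation in `t` is polynomial of degree `2 * (|b| + |d|)`; its leading coefficient is
`4 - x' ^ 2` or `(x - x') ^ 2`, up to sign, where `x, x'` are the traces in the hypotheses. -/
lemma card_traceDiscrim_eq_le {a b c d : ℤ} (hb : b ≠ 0) (hd : d ≠ 0) {s : K}
    (hne : zpowTrace (a + c) s ≠ zpowTrace (a - c) s) (hfour : zpowTrace (a - c) s ^ 2 ≠ 4)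
    (κ : K) :
    #{t | traceDiscrim a b c d s t = κ * traceLeading a b c d s t} ≤
      2 * (b.natAbs + d.natAbs) := by
  set N := b.natAbs + d.natAbs
  set x := zpowTrace (a + c) s with hx
  set x' := zpowTrace (a - c) s with hx'
  set Y := Chebyshev.C K (b + d) with hY
  set Z := Chebyshev.C K (b - d) with hZ
  have degree_Y : Y.natDegree ≤ N := natDegree_chebyshevC_add_le b d
  have degree_Z : Z.natDegree ≤ N := natDegree_chebyshevC_sub_le b d
  set L : K[X] := C x * Z + C x' * Y - C x' * Z with hL
  set R : K[X] := C (κ * (x - x')) * (Y - Z) + C (4 * (x ^ 2 - 4)) with hR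
  have degree_L : L.natDegree ≤ N := by
    rw [hL]
    compute_degree!
  have degree_R : R.natDegree ≤ N := by
    rw [hR]
    compute_degree!
  have leading : L.coeff N ^ 2 - 4 * Y.coeff N ^ 2 ≠ 0 := by
    intro h0
    have coeff_L : L.coeff N = x * Z.coeff N + x' * Y.coeff N - x' * Z.coeff N := by simp [hL]
    rcases coeff_chebyshevC_add_sub (K := K) hb hd with ⟨hY1, hZ0⟩ | ⟨hY0, hZ1⟩
    · rw [coeff_L, hY1, hZ0] at h0
      exact hfour (by linear_combination h0)
    · rw [coeff_L, hY0, hZ1] at h0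
      exact hne (sub_eq_zero.mp (pow_eq_zero_iff two_ne_zero |>.mp (by linear_combination h0)))
  refine (Finset.card_le_card (Finset.monotone_filter_right _ fun t _ ht => ?_)).trans
    (card_sq_eval_sub_mul_sq_eval_eq_le degree_L degree_Y (by lia : R.natDegree < 2 * N) leading)
  simp only [traceDiscrim, traceLeading, zpowTrace] at ht
  simp only [hL, hR, hY, hZ, hx, hx', zpowTrace, eval_sub, eval_add, eval_mul, eval_C]
  linear_combination ht

lemma card_traceDiscrim_eq_le_of_ne {a b c d : ℤ} (ha : a ≠ 0) (hb : b ≠ 0) (hc : c ≠ 0)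
    (hd : d ≠ 0) (hac : a ≠ c) (κ : K) :
    #{z : K × K | traceDiscrim a b c d z.1 z.2 = κ * traceLeading a b c d z.1 z.2} ≤
      3 * wordLength a b c d * Fintype.card K := by
  set B : Finset K := Finset.univ.filter (fun s => zpowTrace (a + c) s = zpowTrace (a - c) s) ∪
    Finset.univ.filter (fun s => zpowTrace (a - c) s ^ 2 = 4) with hB
  have card_B : #B ≤ (a.natAbs + c.natAbs) + 2 * (a.natAbs + c.natAbs) :=
    (Finset.card_union_le _ _).trans <|
      Nat.add_le_add (card_zpowTrace_add_eq_zpowTrace_sub_le ha hc) <|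
        (card_zpowTrace_sq_eq_four_le (sub_ne_zero.mpr hac)).trans (by lia)
  refine (card_filter_prod_le _ B (m := 2 * (b.natAbs + d.natAbs)) fun s hs => ?_).trans ?_
  · simp only [hB, Finset.mem_union, Finset.mem_filter, Finset.mem_univ, true_and, not_or] at hs
    exact card_traceDiscrim_eq_le hb hd hs.1 hs.2 κ
  · rw [← add_mul]
    gcongr
    rw [wordLength]
    lia

lemma card_traceDiscrim_eq_le_of_not_square {a b c d : ℤ} (ha : a ≠ 0) (hb : b ≠ 0)
    (hc : c ≠ 0) (hd : d ≠ 0) (hne : ¬(a = c ∧ b = d)) (κ : K) :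
    #{z : K × K | traceDiscrim a b c d z.1 z.2 = κ * traceLeading a b c d z.1 z.2} ≤
      3 * wordLength a b c d * Fintype.card K := by
  by_cases hac : a = c
  · have swapped := card_traceDiscrim_eq_le_of_ne hb ha hd hc (fun hbd => hne ⟨hac, hbd⟩) κ
    rw [← wordLength_swap] at swapped
    refine (Finset.card_equiv (Equiv.prodComm K K) fun z => ?_).trans_le swapped
    simp [traceDiscrim_swap a b, traceLeading_swap a b]
  · exact card_traceDiscrim_eq_le_of_ne ha hb hc hd hac κ

end Resonance

section SecondMoment

variable {K : Type*} [Field K] [Fintype K] [DecidableEq K]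

/-- The pairs of traces `(s, t)` for which the trace polynomial of `x ^ a * y ^ b * x ^ c * y ^ d`
is quadratic in `u`. -/
noncomputable def quadraticPairs (K : Type*) [Field K] [Fintype K] [DecidableEq K] (a b c d : ℤ) :
    Finset (K × K) :=
  {z | traceCoeff₂ a b c d z.1 z.2 ≠ 0}

/-- The number of triples of traces `(s, t, u)` with `(s, t)` in `quadraticPairs` at which the
trace polynomial of `x ^ a * y ^ b * x ^ c * y ^ d` takes the value `τ`. -/
noncomputable def traceFiberCount (a b c d : ℤ) (τ : K) : ℕ :=
  ∑ z ∈ quadraticPairs K a b c d,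
    #{u | traceCoeff₂ a b c d z.1 z.2 * u ^ 2 + traceCoeff₁ a b c d z.1 z.2 * u +
      traceCoeff₀ a b c d z.1 z.2 = τ}

lemma sum_traceFiberCount_sq_le {a b c d : ℤ} (ha : a ≠ 0) (hb : b ≠ 0) (hc : c ≠ 0)
    (hd : d ≠ 0) (hne : ¬(a = c ∧ b = d)) :
    ∑ τ : K, traceFiberCount a b c d τ ^ 2 ≤ Fintype.card K ^ 4 *
      (Fintype.card K + 2 + 6 * wordLength a b c d) := by
  set q := Fintype.card K
  set n := wordLength a b c d
  have card_pairs : #(quadraticPairs K a b c d) ≤ q ^ 2 :=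
    (Finset.card_le_univ _).trans_eq (by rw [Fintype.card_prod, sq])
  calc ∑ τ : K, traceFiberCount a b c d τ ^ 2
      ≤ #(quadraticPairs K a b c d) ^ 2 * (q + 2) +
          2 * q * (3 * n * q) * #(quadraticPairs K a b c d) := by
        refine sum_sq_sum_card_quadratic_fiber_le _ _ _ _
          (fun z hz => (Finset.mem_filter.mp hz).2) fun κ => ?_
        refine le_trans (Finset.card_le_card fun z hz => ?_)
          (card_traceDiscrim_eq_le_of_not_square ha hb hc hd hne κ)
        have hdiscrim := (Finset.mem_filter.mp hz).2
        rw [Finset.mem_filter_univ, ← mul_discrim_traceCoeff, ← mul_traceCoeff₂, hdiscrim]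
        ring
    _ ≤ (q ^ 2) ^ 2 * (q + 2) + 2 * q * (3 * n * q) * q ^ 2 := by gcongr
    _ = q ^ 4 * (q + 2 + 6 * n) := by ring

end SecondMoment

/-! ### Counting in `SL(2, K)` -/

section Entries

variable {K : Type*} [CommRing K]

lemma mul_sub_mul_eq_one (x : SL(2, K)) : x 0 0 * x 1 1 - x 0 1 * x 1 0 = 1 := by
  rw [← det_fin_two, x.det_coe]

lemma ext_of_tr_eq {x y : SL(2, K)} (htr : tr x = tr y) (h00 : x 0 0 = y 0 0)
    (h01 : x 0 1 = y 0 1) (h10 : x 1 0 = y 1 0) : x = y := by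
  have h11 : x 1 1 = y 1 1 := by
    rw [tr_eq, tr_eq] at htr
    linear_combination htr - h00
  ext i j
  fin_cases i <;> fin_cases j <;> assumption

/-- The Fricke polynomial: at the traces `s, t, u` of `x, y, x * y`, it is the trace of the
commutator of `x` and `y`, minus `2`. -/
def fricke (s t u : K) : K := s ^ 2 + t ^ 2 + u ^ 2 - s * t * u - 4

end Entries

section Counting

variable {K : Type*} [Field K]

/-- The element of `SL(2, K)` with trace `s` and first row `(p, r)`. -/
def ofTraceRow (s p : K) (r : Kˣ) : SL(2, K) :=
  ⟨!![p, r; (p * (s - p) - 1) * (r⁻¹ : Kˣ), s - p], by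
    rw [det_fin_two_of, mul_left_comm, Units.mul_inv, mul_one, sub_sub_cancel]⟩

lemma tr_ofTraceRow (s p : K) (r : Kˣ) : tr (ofTraceRow s p r) = s := by
  rw [tr_eq]
  exact add_sub_cancel p s

variable [Fintype K] [DecidableEq K]

lemma card_tr_eq_and_ne_zero (s : K) :
    #{x : SL(2, K) | tr x = s ∧ x 0 1 ≠ 0} = Fintype.card K * (Fintype.card K - 1) := by
  rw [← Fintype.card_units, ← Fintype.card_prod, ← Finset.card_univ]
  symm
  refine Finset.card_bij (fun z _ => ofTraceRow s z.1 z.2) (fun z _ => ?_) ?_ fun x hx => ?_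
  · exact (Finset.mem_filter_univ _).mpr ⟨tr_ofTraceRow s z.1 z.2, z.2.ne_zero⟩
  · rintro ⟨p, r⟩ - ⟨p', r'⟩ - h
    have h00 := congrArg (fun x : SL(2, K) => x 0 0) h
    have h01 := congrArg (fun x : SL(2, K) => x 0 1) h
    simp only [ofTraceRow] at h00 h01
    exact Prod.ext h00 (Units.ext h01)
  · obtain ⟨htr, h01⟩ := (Finset.mem_filter.mp hx).2
    refine ⟨(x 0 0, Units.mk0 (x 0 1) h01), Finset.mem_univ _,
      ext_of_tr_eq (by rw [tr_ofTraceRow, htr]) rfl rfl ?_⟩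
    rw [tr_eq] at htr
    change (x 0 0 * (s - x 0 0) - 1) * (x 0 1)⁻¹ = x 1 0
    rw [mul_inv_eq_iff_eq_mul₀ h01]
    linear_combination mul_sub_mul_eq_one x - x 0 0 * htr

lemma card_tr_eq_and_eq_zero (s : K) :
    #{x : SL(2, K) | tr x = s ∧ x 0 1 = 0} =
      #{p : K | p ^ 2 - s * p + 1 = 0} * Fintype.card K := by
  rw [← Finset.card_univ, ← Finset.card_product]
  refine Finset.card_bij (fun x _ => (x 0 0, x 1 0)) (fun x hx => ?_) (fun x hx y hy h => ?_) ?_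
  · obtain ⟨htr, h01⟩ := (Finset.mem_filter.mp hx).2
    have hdet := mul_sub_mul_eq_one x
    rw [tr_eq] at htr
    simp only [Finset.mem_product, Finset.mem_filter, Finset.mem_univ, true_and, and_true]
    linear_combination x 0 0 * htr - hdet - x 1 0 * h01
  · obtain ⟨htr, h01⟩ := (Finset.mem_filter.mp hx).2
    obtain ⟨htr', h01'⟩ := (Finset.mem_filter.mp hy).2
    obtain ⟨h00, h10⟩ := Prod.ext_iff.mp h
    exact ext_of_tr_eq (htr.trans htr'.symm) h00 (h01.trans h01'.symm) h10
  · rintro ⟨p, r⟩ hp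
    simp only [Finset.mem_product, Finset.mem_filter, Finset.mem_univ, true_and, and_true] at hp
    have hdet : (!![p, 0; r, s - p] : Matrix (Fin 2) (Fin 2) K).det = 1 := by
      rw [det_fin_two_of]
      linear_combination -hp
    exact ⟨⟨!![p, 0; r, s - p], hdet⟩,
      (Finset.mem_filter_univ _).mpr ⟨(tr_eq _).trans (add_sub_cancel p s), rfl⟩, rfl⟩

lemma card_tr_eq (s : K) :
    #{x : SL(2, K) | tr x = s} = Fintype.card K * (Fintype.card K - 1) +
      #{p : K | p ^ 2 - s * p + 1 = 0} * Fintype.card K := by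
  rw [← card_tr_eq_and_ne_zero s, ← card_tr_eq_and_eq_zero s,
    ← Finset.card_filter_add_card_filter_not fun x : SL(2, K) => x 0 1 ≠ 0]
  simp only [Finset.filter_filter, not_not]

lemma card_tr_eq_le (s : K) :
    #{x : SL(2, K) | tr x = s} ≤ Fintype.card K ^ 2 + Fintype.card K := by
  have roots : #{p : K | p ^ 2 - s * p + 1 = 0} ≤ 2 := by
    simpa [sub_eq_add_neg] using card_quadratic_le_two (B := -s) 1 (Or.inl one_ne_zero)
  rw [card_tr_eq]
  obtain ⟨k, hk⟩ := Nat.exists_eq_add_of_lt (Fintype.card_pos (α := K))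
  rw [hk]
  simp only [zero_add, add_tsub_cancel_right]
  nlinarith

lemma card_sq_le_card_tr_eq_add (s : K) :
    Fintype.card K ^ 2 ≤ #{x : SL(2, K) | tr x = s} + Fintype.card K := by
  rw [card_tr_eq, sq]
  nlinarith [Nat.sub_add_cancel (Fintype.card_pos (α := K))]

lemma card_specialLinearGroup_add :
    Fintype.card SL(2, K) + Fintype.card K = Fintype.card K ^ 3 := by
  set q := Fintype.card K with hq
  have roots (p : K) : #{s | p ^ 2 - s * p + 1 = 0} = if p = 0 then 0 else 1 := by
    split_ifs with hp
    · simp [hp]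
    · rw [Finset.card_eq_one]
      refine ⟨(p ^ 2 + 1) / p, Finset.ext fun s => ?_⟩
      rw [Finset.mem_filter_univ, Finset.mem_singleton, eq_div_iff hp]
      constructor <;> intro h <;> linear_combination -h
  have sum_roots : ∑ s : K, #{p : K | p ^ 2 - s * p + 1 = 0} = q - 1 := by
    simp only [Finset.card_filter] at roots ⊢
    rw [Finset.sum_comm]
    simp only [roots]
    simp [Finset.sum_ite, Finset.filter_ne', Finset.card_erase_of_mem, hq]
  have card_eq : Fintype.card SL(2, K) = q * (q * (q - 1)) + (q - 1) * q := by
    rw [← Finset.card_univ, Finset.card_eq_sum_card_fiberwise (f := tr) (t := Finset.univ)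
      fun _ _ => Finset.mem_coe.mpr (Finset.mem_univ _)]
    simp only [card_tr_eq, Finset.sum_add_distrib, ← Finset.sum_mul, sum_roots, Finset.sum_const,
      Finset.card_univ, smul_eq_mul, hq, mul_assoc]
  obtain ⟨k, hk⟩ := Nat.exists_eq_add_of_lt (Fintype.card_pos (α := K))
  rw [card_eq, hq, hk]
  simp only [zero_add, add_tsub_cancel_right]
  ring

end Counting

section Pairs

variable {K : Type*} [Field K] [Fintype K] [DecidableEq K]

lemma card_entry_eq_zero_le : #{x : SL(2, K) | x 0 1 = 0} ≤ Fintype.card K ^ 2 := by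
  rw [sq, ← Fintype.card_prod, ← Finset.card_univ]
  refine Finset.card_le_card_of_injOn (fun x => (x 0 0, x 1 0)) (fun _ _ => Finset.mem_univ _) ?_
  intro x hx y hy h
  obtain ⟨h00, h10⟩ : x 0 0 = y 0 0 ∧ x 1 0 = y 1 0 := Prod.ext_iff.mp h
  have h01 : x 0 1 = 0 := (Finset.mem_filter_univ x).mp hx
  have h01' : y 0 1 = 0 := (Finset.mem_filter_univ y).mp hy
  have hdet := mul_sub_mul_eq_one x
  have hdet' := mul_sub_mul_eq_one y
  rw [h01, zero_mul, sub_zero] at hdet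
  rw [h01', zero_mul, sub_zero, ← h00] at hdet'
  have h11 : x 1 1 = y 1 1 :=
    mul_left_cancel₀ (left_ne_zero_of_mul_eq_one hdet) (hdet.trans hdet'.symm)
  refine ext_of_tr_eq ?_ h00 (h01.trans h01'.symm) h10
  rw [tr_eq, tr_eq, h00, h11]

/-- For fixed `x` the lower row of `y` is determined by `tr y`, `tr (x * y)` and the upper row,
and `det y = 1` becomes the equation of a conic. -/
lemma card_tr_eq_and_tr_mul_eq_le_card_conic {x : SL(2, K)} (hx : x 0 1 ≠ 0) (t u : K) :
    #{y : SL(2, K) | tr y = t ∧ tr (x * y) = u} ≤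
      #{z : K × K | -x 0 1 * z.1 ^ 2 + (x 0 0 - x 1 1) * z.1 * z.2 + x 1 0 * z.2 ^ 2 +
        x 0 1 * t * z.1 + (x 1 1 * t - u) * z.2 + -x 0 1 = 0} := by
  refine Finset.card_le_card_of_injOn (fun y => (y 0 0, y 0 1)) (fun y hy => ?_) ?_
  · obtain ⟨htr, htr_mul⟩ := (Finset.mem_filter_univ y).mp hy
    rw [tr_eq] at htr
    rw [tr_mul] at htr_mul
    have hdet := mul_sub_mul_eq_one y
    simp only [Finset.coe_filter, Finset.mem_univ, true_and, Set.mem_ofPred_eq]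
    linear_combination x 0 1 * hdet + y 0 1 * htr_mul -
      (x 0 1 * y 0 0 + x 1 1 * y 0 1) * htr
  · intro y hy y' hy' h
    obtain ⟨htr, htr_mul⟩ := (Finset.mem_filter_univ y).mp hy
    obtain ⟨htr', htr_mul'⟩ := (Finset.mem_filter_univ y').mp hy'
    obtain ⟨h00, h01⟩ : y 0 0 = y' 0 0 ∧ y 0 1 = y' 0 1 := Prod.ext_iff.mp h
    refine ext_of_tr_eq (htr.trans htr'.symm) h00 h01 (mul_left_cancel₀ hx ?_)
    rw [tr_eq] at htr htr'
    rw [tr_mul] at htr_mul htr_mul'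
    linear_combination htr_mul - htr_mul' - x 1 1 * (htr - htr') - (x 0 0 - x 1 1) * h00 -
      x 1 0 * h01

lemma card_tr_eq_and_tr_mul_eq_le {x : SL(2, K)} (hx : x 0 1 ≠ 0) {t u : K}
    (h : fricke (tr x) t u ≠ 0) :
    #{y : SL(2, K) | tr y = t ∧ tr (x * y) = u} ≤ Fintype.card K + 2 := by
  refine (card_tr_eq_and_tr_mul_eq_le_card_conic hx t u).trans (card_conic_le _ _ _ _ _ _ ?_)
  have discriminant_eq : x 0 1 * fricke (tr x) t u =
      4 * -x 0 1 * x 1 0 * -x 0 1 + (x 0 0 - x 1 1) * (x 0 1 * t) * (x 1 1 * t - u) -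
        -x 0 1 * (x 1 1 * t - u) ^ 2 - x 1 0 * (x 0 1 * t) ^ 2 -
        -x 0 1 * (x 0 0 - x 1 1) ^ 2 := by
    rw [fricke, tr_eq]
    linear_combination (4 - t ^ 2) * x 0 1 * mul_sub_mul_eq_one x
  exact discriminant_eq ▸ mul_ne_zero hx h

lemma card_tr_eq_and_tr_mul_eq_le_two_mul {x : SL(2, K)} (hx : x 0 1 ≠ 0) (t u : K) :
    #{y : SL(2, K) | tr y = t ∧ tr (x * y) = u} ≤ 2 * Fintype.card K := by
  refine (card_tr_eq_and_tr_mul_eq_le_card_conic hx t u).trans ?_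
  refine (Finset.card_le_card (Finset.monotone_filter_right _ fun z _ hz => ?_)).trans
    (card_quadratic_family_le (neg_ne_zero.mpr hx)
      (fun r => (x 0 0 - x 1 1) * r + x 0 1 * t)
      fun r => x 1 0 * r ^ 2 + (x 1 1 * t - u) * r - x 0 1)
  linear_combination hz

lemma card_fricke_eq_zero_le {x : SL(2, K)} (hx : x 0 1 ≠ 0) :
    #{y | fricke (tr x) (tr y) (tr (x * y)) = 0} ≤ 4 * Fintype.card K ^ 2 := by
  have card_pairs : #{z : K × K | fricke (tr x) z.2 z.1 = 0} ≤ 2 * Fintype.card K := by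
    refine (Finset.card_le_card (Finset.monotone_filter_right _ fun z _ hz => ?_)).trans
      (card_quadratic_family_le one_ne_zero (fun t => -(tr x * t)) fun t => tr x ^ 2 + t ^ 2 - 4)
    rw [fricke] at hz
    linear_combination hz
  calc #{y | fricke (tr x) (tr y) (tr (x * y)) = 0}
      ≤ 2 * Fintype.card K * #{z : K × K | fricke (tr x) z.2 z.1 = 0} := by
        refine Finset.card_le_mul_card_image_of_maps_to (f := fun y => (tr (x * y), tr y))
          (fun y hy => ?_) _ fun z _ => ?_
        · simpa using hy
        · refine (Finset.card_le_card fun y hy => ?_).trans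
            (card_tr_eq_and_tr_mul_eq_le_two_mul hx z.2 z.1)
          have h := Prod.ext_iff.mp (Finset.mem_filter.mp hy).2
          exact (Finset.mem_filter_univ y).mpr h.symm
    _ ≤ 2 * Fintype.card K * (2 * Fintype.card K) := by gcongr
    _ = 4 * Fintype.card K ^ 2 := by ring

/-- The pairs `(x, y)` avoiding the degeneracies of the count of pairs with prescribed traces
of `x, y, x * y`, and at which the trace polynomial of `x ^ a * y ^ b * x ^ c * y ^ d` is
quadratic in `tr (x * y)`. -/
noncomputable def genericPairs (K : Type*) [Field K] [Fintype K] [DecidableEq K] (a b c d : ℤ) :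
    Finset (SL(2, K) × SL(2, K)) :=
  {z | z.1 0 1 ≠ 0 ∧ (tr z.1, tr z.2) ∈ quadraticPairs K a b c d ∧
    fricke (tr z.1) (tr z.2) (tr (z.1 * z.2)) ≠ 0}

lemma card_genericPairs_tr_eq_le (a b c d : ℤ) (s t u : K) :
    #{z ∈ genericPairs K a b c d | tr z.1 = s ∧ tr z.2 = t ∧ tr (z.1 * z.2) = u} ≤
      (Fintype.card K + 2) * (Fintype.card K ^ 2 + Fintype.card K) := by
  refine (Finset.card_le_mul_card_image_of_maps_to (f := Prod.fst) (t := {x | tr x = s})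
    (fun z hz => ?_) (Fintype.card K + 2) fun x hx => ?_).trans
    (Nat.mul_le_mul_left _ (card_tr_eq_le s))
  · exact (Finset.mem_filter_univ _).mpr (Finset.mem_filter.mp hz).2.1
  · set slice := {z ∈ {z ∈ genericPairs K a b c d |
      tr z.1 = s ∧ tr z.2 = t ∧ tr (z.1 * z.2) = u} | z.1 = x} with hslice
    rcases slice.eq_empty_or_nonempty with hempty | ⟨z, hz⟩
    · simp [hempty]
    have mem_slice {z} (hz : z ∈ slice) : (z.1 0 1 ≠ 0 ∧
        fricke (tr z.1) (tr z.2) (tr (z.1 * z.2)) ≠ 0) ∧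
        (tr z.2 = t ∧ tr (z.1 * z.2) = u) ∧ z.1 = x := by
      simp only [hslice, genericPairs, Finset.mem_filter] at hz
      tauto
    obtain ⟨⟨h01, hfricke⟩, ⟨rfl, rfl⟩, rfl⟩ := mem_slice hz
    refine (Finset.card_le_card_of_injOn Prod.snd (fun w hw => ?_) ?_).trans
      (card_tr_eq_and_tr_mul_eq_le h01 hfricke)
    · obtain ⟨-, htr, hfst⟩ := mem_slice hw
      exact (Finset.mem_filter_univ _).mpr (hfst ▸ htr)
    · intro w hw w' hw' hsnd
      exact Prod.ext ((mem_slice hw).2.2.trans (mem_slice hw').2.2.symm) hsnd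

lemma card_genericPairs_tr_complexityTwoMap_eq_le (a b c d : ℤ) (τ : K) :
    #{z ∈ genericPairs K a b c d | tr (complexityTwoMap a b c d z) = τ} ≤
      (Fintype.card K + 2) * (Fintype.card K ^ 2 + Fintype.card K) *
        traceFiberCount a b c d τ := by
  rw [traceFiberCount, ← Finset.card_sigma]
  refine Finset.card_le_mul_card_image_of_maps_to
    (f := fun z => ⟨(tr z.1, tr z.2), tr (z.1 * z.2)⟩) (fun z hz => ?_) _ fun v _ => ?_
  · obtain ⟨hz, htr⟩ := Finset.mem_filter.mp hz
    rw [Finset.mem_sigma, Finset.mem_filter_univ, ← tr_complexityTwoMap]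
    exact ⟨((Finset.mem_filter_univ z).mp hz).2.1, htr⟩
  · refine (Finset.card_le_card fun z hz => ?_).trans
      (card_genericPairs_tr_eq_le a b c d v.1.1 v.1.2 v.2)
    obtain ⟨hz_fiber, rfl⟩ := Finset.mem_filter.mp hz
    exact Finset.mem_filter.mpr ⟨(Finset.mem_filter.mp hz_fiber).1, rfl, rfl, rfl⟩

lemma card_zpowTrace_tr_le {m n : ℤ} (hm : m ≠ 0) (hn : n ≠ 0) :
    #{x : SL(2, K) | zpowTrace (m + n) (tr x) = zpowTrace (m - n) (tr x)} ≤
      (Fintype.card K ^ 2 + Fintype.card K) * (m.natAbs + n.natAbs) := by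
  refine (Finset.card_le_mul_card_image_of_maps_to (f := tr)
    (t := {s | zpowTrace (m + n) s = zpowTrace (m - n) s}) (fun x hx => ?_) _ fun s _ => ?_).trans
    (Nat.mul_le_mul_left _ (card_zpowTrace_add_eq_zpowTrace_sub_le hm hn))
  · simpa using hx
  · exact (Finset.card_le_card (Finset.filter_subset_filter _ (Finset.filter_subset _ _))).trans
      (card_tr_eq_le s)

lemma mem_quadraticPairs_of_zpowTrace_ne {a b c d : ℤ} {s t : K}
    (hs : zpowTrace (a + c) s ≠ zpowTrace (a - c) s)
    (ht : zpowTrace (b + d) t ≠ zpowTrace (b - d) t) : (s, t) ∈ quadraticPairs K a b c d := by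
  refine (Finset.mem_filter_univ _).mpr fun h => ?_
  have leading_eq := mul_traceCoeff₂ a b c d s t
  rw [h, mul_zero] at leading_eq
  exact mul_ne_zero (sub_ne_zero.mpr hs) (sub_ne_zero.mpr ht) leading_eq.symm

lemma card_compl_genericPairs_le {a b c d : ℤ} (ha : a ≠ 0) (hb : b ≠ 0) (hc : c ≠ 0)
    (hd : d ≠ 0) :
    #(genericPairs K a b c d)ᶜ ≤
      (5 + 2 * wordLength a b c d) * Fintype.card K ^ 5 := by
  set q := Fintype.card K
  set B : Finset SL(2, K) := Finset.univ.filter (fun x => x 0 1 = 0) ∪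
    Finset.univ.filter (fun x => zpowTrace (a + c) (tr x) = zpowTrace (a - c) (tr x)) with hB
  have card_B : #B ≤ q ^ 2 + (q ^ 2 + q) * (a.natAbs + c.natAbs) :=
    (Finset.card_union_le _ _).trans
      (Nat.add_le_add card_entry_eq_zero_le (card_zpowTrace_tr_le ha hc))
  have slice (x : SL(2, K)) (hx : x ∉ B) : #{y | (x, y) ∉ genericPairs K a b c d} ≤
      4 * q ^ 2 + (q ^ 2 + q) * (b.natAbs + d.natAbs) := by
    simp only [hB, Finset.mem_union, Finset.mem_filter_univ, not_or] at hx
    refine le_trans (Finset.card_le_card fun y hy => ?_) <| (Finset.card_union_le _ _).trans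
      (Nat.add_le_add (card_fricke_eq_zero_le hx.1) (card_zpowTrace_tr_le hb hd))
    rw [Finset.mem_union, Finset.mem_filter_univ, Finset.mem_filter_univ]
    by_contra! h
    exact (Finset.mem_filter_univ y).mp hy <| (Finset.mem_filter_univ _).mpr
      ⟨hx.1, mem_quadraticPairs_of_zpowTrace_ne hx.2 h.2, h.1⟩
  have card_group : Fintype.card SL(2, K) ≤ q ^ 3 :=
    (Nat.le_add_right _ _).trans_eq card_specialLinearGroup_add
  have q_le : q ≤ q ^ 2 := Nat.le_self_pow two_ne_zero q
  calc #(genericPairs K a b c d)ᶜ = #{z | z ∉ genericPairs K a b c d} := by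
        congr 1
        ext z
        simp
    _ ≤ #B * Fintype.card SL(2, K) +
          (4 * q ^ 2 + (q ^ 2 + q) * (b.natAbs + d.natAbs)) * Fintype.card SL(2, K) :=
        card_filter_prod_le _ B slice
    _ ≤ (q ^ 2 + (q ^ 2 + q ^ 2) * (a.natAbs + c.natAbs)) * q ^ 3 +
          (4 * q ^ 2 + (q ^ 2 + q ^ 2) * (b.natAbs + d.natAbs)) * q ^ 3 := by
        gcongr
        exact card_B.trans (by gcongr)
    _ = (5 + 2 * wordLength a b c d) * q ^ 5 := by
        rw [wordLength]
        ring

end Pairs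

/-! ### Fibres over a trace class -/

section Conjugation

/-- Conjugation by an element of `GL n R` as an automorphism of `SL n R`. -/
def specialLinearConj {n R : Type*} [Fintype n] [DecidableEq n] [CommRing R] (P : GL n R) :
    SpecialLinearGroup n R ≃* SpecialLinearGroup n R where
  toFun x := ⟨P * x * (P⁻¹ : GL n R), by rw [det_units_conj, x.det_coe]⟩
  invFun x := ⟨(P⁻¹ : GL n R) * x * P, by rw [det_units_conj', x.det_coe]⟩
  left_inv x := Subtype.ext <| by simp [mul_assoc]
  right_inv x := Subtype.ext <| by simp [mul_assoc]
  map_mul' x y := Subtype.ext <|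
    show (P : Matrix n n R) * (x * y) * (P⁻¹ : GL n R) =
        P * x * (P⁻¹ : GL n R) * (P * y * (P⁻¹ : GL n R)) by simp [mul_assoc]

lemma specialLinearConj_apply_eq_iff {n R : Type*} [Fintype n] [DecidableEq n] [CommRing R]
    {P : GL n R} {x y : SpecialLinearGroup n R} :
    specialLinearConj P x = y ↔ (P : Matrix n n R) * x = y * P :=
  Subtype.ext_iff.trans (Units.mul_inv_eq_iff_eq_mul P)

variable {K : Type*} [Field K]

lemma exists_cyclic_vector {g : SL(2, K)} (hg : tr g ^ 2 ≠ 4) :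
    ∃ v w : K, v * (g 1 0 * v + g 1 1 * w) - (g 0 0 * v + g 0 1 * w) * w ≠ 0 := by
  by_contra! degenerate
  have h10 := degenerate 1 0
  have h01 := degenerate 0 1
  have hdiag := degenerate 1 1
  refine hg ?_
  rw [tr_eq]
  have hdet := mul_sub_mul_eq_one g
  simp only [mul_one, mul_zero, one_mul, zero_mul, zero_add, add_zero, sub_zero, zero_sub,
    neg_eq_zero] at h10 h01 hdiag
  rw [h10, h01, zero_add, add_zero, sub_eq_zero] at hdiag
  rw [h10, h01, hdiag] at hdet
  rw [hdiag]
  linear_combination 4 * hdet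

/-- In the basis `v, g v`, the matrix of `g` is the companion matrix of its characteristic
polynomial. -/
lemma exists_specialLinearConj_eq_ofTraceRow {g : SL(2, K)} (hg : tr g ^ 2 ≠ 4) :
    ∃ P : GL (Fin 2) K, specialLinearConj P (ofTraceRow (tr g) 0 (-1)) = g := by
  obtain ⟨v, w, hvw⟩ := exists_cyclic_vector hg
  set B : Matrix (Fin 2) (Fin 2) K :=
    !![v, g 0 0 * v + g 0 1 * w; w, g 1 0 * v + g 1 1 * w] with hB
  have det_ne_zero : B.det ≠ 0 := by rwa [hB, det_fin_two_of]
  have companion : (ofTraceRow (tr g) 0 (-1) : Matrix (Fin 2) (Fin 2) K) =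
      !![0, -1; 1, tr g] := by simp [ofTraceRow]
  have intertwine : B * !![0, -1; 1, tr g] = !![g 0 0, g 0 1; g 1 0, g 1 1] * B := by
    have hdet := mul_sub_mul_eq_one g
    rw [hB, mul_fin_two, mul_fin_two, tr_eq]
    ext i j
    fin_cases i <;> fin_cases j
    all_goals simp only [Fin.zero_eta, Fin.mk_one, of_apply, cons_val', cons_val_zero,
      cons_val_one, cons_val_fin_one]
    · ring
    · linear_combination v * hdet
    · ring
    · linear_combination w * hdet
  refine ⟨GeneralLinearGroup.mkOfDetNeZero B det_ne_zero, ?_⟩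
  rw [specialLinearConj_apply_eq_iff, companion]
  exact intertwine.trans (congrArg (· * B) (eta_fin_two (g : Matrix (Fin 2) (Fin 2) K)).symm)

lemma exists_mulEquiv_apply_eq_of_tr_eq {g g' : SL(2, K)} (htr : tr g = tr g')
    (hg : tr g ^ 2 ≠ 4) : ∃ φ : SL(2, K) ≃* SL(2, K), φ g = g' := by
  obtain ⟨P, hP⟩ := exists_specialLinearConj_eq_ofTraceRow hg
  obtain ⟨P', hP'⟩ := exists_specialLinearConj_eq_ofTraceRow (htr ▸ hg)
  refine ⟨(specialLinearConj P).symm.trans (specialLinearConj P'), ?_⟩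
  rw [MulEquiv.trans_apply, (specialLinearConj P).symm_apply_eq.mpr hP.symm, htr, hP']

end Conjugation

section Fibers

lemma map_complexityTwoMap {G H : Type*} [Group G] [Group H] (φ : G →* H) (a b c d : ℤ)
    (x y : G) : φ (complexityTwoMap a b c d (x, y)) = complexityTwoMap a b c d (φ x, φ y) := by
  simp only [complexityTwoMap, map_mul, map_zpow]

lemma card_complexityTwoMap_eq_mulEquiv {G : Type*} [Group G] [Fintype G] [DecidableEq G]
    (φ : G ≃* G) (a b c d : ℤ) (g : G) :
    #{z | complexityTwoMap a b c d z = g} = #{z | complexityTwoMap a b c d z = φ g} := by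
  refine Finset.card_equiv (φ.toEquiv.prodCongr φ.toEquiv) fun z => ?_
  have equivariant := map_complexityTwoMap φ.toMonoidHom a b c d z.1 z.2
  rw [Finset.mem_filter_univ, Finset.mem_filter_univ, ← φ.apply_eq_iff_eq]
  exact equivariant ▸ Iff.rfl

lemma card_tr_complexityTwoMap_eq {K : Type*} [Field K] [Fintype K] [DecidableEq K]
    (a b c d : ℤ) {g : SL(2, K)} (hg : tr g ^ 2 ≠ 4) :
    #{z | tr (complexityTwoMap a b c d z) = tr g} =
      #{x | tr x = tr g} * #{z | complexityTwoMap a b c d z = g} := by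
  rw [Finset.card_eq_sum_card_fiberwise (f := complexityTwoMap a b c d) (t := {x | tr x = tr g})
    fun z hz => by simpa using hz]
  refine Finset.sum_const_nat fun x hx => ?_
  have htr : tr x = tr g := (Finset.mem_filter_univ x).mp hx
  obtain ⟨φ, rfl⟩ := exists_mulEquiv_apply_eq_of_tr_eq htr.symm hg
  rw [card_complexityTwoMap_eq_mulEquiv φ, Finset.filter_filter]
  congr 1
  ext z
  simp only [Finset.mem_filter_univ, and_iff_right_iff_imp]
  intro h
  rw [h, htr]

end Fibers

/-! ### Equidistribution -/

section SecondMomentMethod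

lemma card_mul_sq_le_of_sum_sub_sq_le {ι : Type*} [Fintype ι] {S B : ι → ℝ} {T V c δ : ℝ}
    (hT : 0 < T) (hδ : 0 < δ) (hB : ∀ i, 0 ≤ B i) (hS : ∑ i, (S i - T) ^ 2 ≤ V * T ^ 2)
    (hB_sum : ∑ i, B i ≤ c * T) :
    #{i | 2 * δ * T ≤ |S i + B i - T|} * δ ^ 2 ≤ V + δ * c := by
  have le_summand (i : ι) (hi : 2 * δ * T ≤ |S i + B i - T|) :
      (δ * T) ^ 2 ≤ (S i - T) ^ 2 + δ * T * B i := by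
    have triangle : |S i + B i - T| ≤ |S i - T| + B i := by
      rw [add_sub_right_comm]
      exact (abs_add_le _ _).trans_eq (by rw [abs_of_nonneg (hB i)])
    have hδT : 0 < δ * T := mul_pos hδ hT
    rcases le_or_gt (δ * T) (B i) with h | h
    · nlinarith [sq_nonneg (S i - T)]
    · have deviation : δ * T ≤ |S i - T| := by linarith
      rw [← sq_abs (S i - T)]
      nlinarith [hB i, deviation]
  refine le_of_mul_le_mul_right ?_ (pow_pos hT 2)
  calc #{i | 2 * δ * T ≤ |S i + B i - T|} * δ ^ 2 * T ^ 2
      = ∑ i with 2 * δ * T ≤ |S i + B i - T|, (δ * T) ^ 2 := by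
        rw [Finset.sum_const, nsmul_eq_mul]
        ring
    _ ≤ ∑ i with 2 * δ * T ≤ |S i + B i - T|, ((S i - T) ^ 2 + δ * T * B i) :=
        Finset.sum_le_sum fun i hi => le_summand i (Finset.mem_filter.mp hi).2
    _ ≤ ∑ i, ((S i - T) ^ 2 + δ * T * B i) :=
        Finset.sum_le_univ_sum_of_nonneg fun i =>
          add_nonneg (sq_nonneg _) (mul_nonneg (mul_pos hδ hT).le (hB i))
    _ = ∑ i, (S i - T) ^ 2 + δ * T * ∑ i, B i := by
        rw [Finset.sum_add_distrib, Finset.mul_sum]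
    _ ≤ V * T ^ 2 + δ * T * (c * T) := by gcongr
    _ = (V + δ * c) * T ^ 2 := by ring

end SecondMomentMethod

section TraceDeviation

variable {K : Type*} [Field K] [Fintype K] [DecidableEq K]

lemma sum_card_genericPairs_sq_le {a b c d : ℤ} (ha : a ≠ 0) (hb : b ≠ 0) (hc : c ≠ 0)
    (hd : d ≠ 0) (hne : ¬(a = c ∧ b = d)) :
    ∑ τ, #{z ∈ genericPairs K a b c d | tr (complexityTwoMap a b c d z) = τ} ^ 2 ≤
      Fintype.card K ^ 11 +
        (107 + 216 * wordLength a b c d) * Fintype.card K ^ 10 := by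
  set q := Fintype.card K
  set n := wordLength a b c d
  have one_le_q : 1 ≤ q := Fintype.card_pos
  calc ∑ τ, #{z ∈ genericPairs K a b c d | tr (complexityTwoMap a b c d z) = τ} ^ 2
      ≤ ∑ τ, ((q + 2) * (q ^ 2 + q) * traceFiberCount a b c d τ) ^ 2 := by
        gcongr with τ
        exact card_genericPairs_tr_complexityTwoMap_eq_le a b c d τ
    _ = ((q + 2) * (q ^ 2 + q)) ^ 2 * ∑ τ : K, traceFiberCount a b c d τ ^ 2 := by
        simp only [mul_pow, Finset.mul_sum]
    _ ≤ ((q + 2) * (q ^ 2 + q)) ^ 2 * (q ^ 4 * (q + 2 + 6 * n)) := by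
        gcongr
        exact sum_traceFiberCount_sq_le ha hb hc hd hne
    _ = q ^ 6 * ((q ^ 4 + 6 * q ^ 3 + 13 * q ^ 2 + 12 * q + 4) * (q + 2 + 6 * n)) := by ring
    _ ≤ q ^ 6 * ((q ^ 4 + 6 * q ^ 3 + 13 * q ^ 3 + 12 * q ^ 3 + 4 * q ^ 3) * (q + 2 + 6 * n)) := by
        gcongr
        · norm_num
        · exact Nat.le_self_pow three_ne_zero q
        · exact Nat.le_mul_of_pos_right 4 (Nat.pow_pos one_le_q)
    _ = q ^ 11 + (37 + 6 * n) * q ^ 10 + (70 + 210 * n) * q ^ 9 := by ring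
    _ ≤ q ^ 11 + (37 + 6 * n) * q ^ 10 + (70 + 210 * n) * q ^ 10 := by
        gcongr
        norm_num
    _ = q ^ 11 + (107 + 216 * n) * q ^ 10 := by ring

lemma le_sum_card_genericPairs_add {a b c d : ℤ} (ha : a ≠ 0) (hb : b ≠ 0) (hc : c ≠ 0)
    (hd : d ≠ 0) :
    Fintype.card K ^ 6 ≤
      ∑ τ, #{z ∈ genericPairs K a b c d | tr (complexityTwoMap a b c d z) = τ} +
        (7 + 2 * wordLength a b c d) * Fintype.card K ^ 5 := by
  set q := Fintype.card K
  have card_group : Fintype.card SL(2, K) + q = q ^ 3 := card_specialLinearGroup_add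
  have card_compl := card_compl_genericPairs_le (K := K) ha hb hc hd
  have card_add_compl := Finset.card_add_card_compl (genericPairs K a b c d)
  rw [Fintype.card_prod] at card_add_compl
  rw [← Finset.card_eq_sum_card_fiberwise fun _ _ => Finset.mem_coe.mpr (Finset.mem_univ _)]
  have q_pow_le : q ^ 4 ≤ q ^ 5 := Nat.pow_le_pow_right Fintype.card_pos (by norm_num)
  have square : q ^ 6 ≤ Fintype.card SL(2, K) * Fintype.card SL(2, K) + 2 * q ^ 4 :=
    calc q ^ 6 = (Fintype.card SL(2, K) + q) * (Fintype.card SL(2, K) + q) := by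
          rw [card_group]
          ring
      _ ≤ Fintype.card SL(2, K) * Fintype.card SL(2, K) +
            2 * ((Fintype.card SL(2, K) + q) * q) := by nlinarith
      _ = _ := by
          rw [card_group]
          ring
  linarith

lemma sum_card_genericPairs_sub_sq_le {a b c d : ℤ} (ha : a ≠ 0) (hb : b ≠ 0) (hc : c ≠ 0)
    (hd : d ≠ 0) (hne : ¬(a = c ∧ b = d)) :
    ∑ τ, ((#{z ∈ genericPairs K a b c d | tr (complexityTwoMap a b c d z) = τ} : ℝ) -
        Fintype.card K ^ 5) ^ 2 ≤
      (121 + 220 * wordLength a b c d) * (Fintype.card K ^ 5) ^ 2 := by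
  have second_moment := sum_card_genericPairs_sq_le (K := K) ha hb hc hd hne
  have first_moment := le_sum_card_genericPairs_add (K := K) ha hb hc hd
  set S : K → ℕ := fun τ =>
    #{z ∈ genericPairs K a b c d | tr (complexityTwoMap a b c d z) = τ}
  set q := Fintype.card K with hq
  replace second_moment : (∑ τ, (S τ : ℝ) ^ 2) ≤
      q ^ 11 + (107 + 216 * wordLength a b c d) * q ^ 10 := mod_cast second_moment
  replace first_moment : (q : ℝ) ^ 6 ≤ ∑ τ, (S τ : ℝ) + (7 + 2 * wordLength a b c d) * q ^ 5 :=
    mod_cast first_moment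
  have expand : ∑ τ, ((S τ : ℝ) - q ^ 5) ^ 2 =
      ∑ τ, (S τ : ℝ) ^ 2 - 2 * q ^ 5 * ∑ τ, (S τ : ℝ) + q * (q ^ 5) ^ 2 := by
    simp only [sub_sq, Finset.sum_add_distrib, Finset.sum_sub_distrib, Finset.sum_const,
      Finset.card_univ, nsmul_eq_mul, Finset.mul_sum, ← hq]
    congr! 3
    ring
  rw [expand]
  nlinarith [mul_le_mul_of_nonneg_left first_moment (by positivity : (0 : ℝ) ≤ 2 * q ^ 5)]

lemma card_trace_deviation_mul_sq_le {a b c d : ℤ} (ha : a ≠ 0) (hb : b ≠ 0) (hc : c ≠ 0)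
    (hd : d ≠ 0) (hne : ¬(a = c ∧ b = d)) {δ : ℝ} (hδ : 0 < δ) :
    #{τ : K | 2 * δ * Fintype.card K ^ 5 ≤
        |(#{z | tr (complexityTwoMap a b c d z) = τ} : ℝ) - Fintype.card K ^ 5|} * δ ^ 2 ≤
      121 + 220 * wordLength a b c d +
        δ * (5 + 2 * wordLength a b c d) := by
  have card_compl := card_compl_genericPairs_le (K := K) ha hb hc hd
  rw [Finset.card_eq_sum_card_fiberwise (f := fun z => tr (complexityTwoMap a b c d z))
    fun _ _ => Finset.mem_coe.mpr (Finset.mem_univ _)] at card_compl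
  refine le_trans (le_of_eq ?_) <| card_mul_sq_le_of_sum_sub_sq_le
    (pow_pos (Nat.cast_pos.mpr Fintype.card_pos) 5) hδ (fun _ => Nat.cast_nonneg _)
    (sum_card_genericPairs_sub_sq_le (K := K) ha hb hc hd hne) (mod_cast card_compl)
  congr! 7 with τ
  rw [← Nat.cast_add, ← Finset.card_union_of_disjoint
    (Finset.disjoint_filter_filter disjoint_compl_right), ← Finset.filter_union,
    Finset.union_compl]

end TraceDeviation

section ElementDeviation

lemma abs_sub_lt_of_abs_mul_sub_lt {q G c N η : ℝ} (hq : 4 ≤ q) (hη : 8 < η * q)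
    (hG : G + q = q ^ 3) (hc : q ^ 2 ≤ c + q) (hc' : c ≤ q ^ 2 + q)
    (h : |c * N - q ^ 5| < η / 4 * q ^ 5) : |N - G| < η * G := by
  have q_pos : 0 < q := by linarith
  have η_pos : 0 < η := pos_of_mul_pos_left (by linarith) q_pos.le
  have c_pos : 0 < c := by nlinarith
  have G_pos : 0 < G := by nlinarith
  have lower : q ^ 5 - 2 * q ^ 4 ≤ c * G := by
    refine le_trans ?_ (mul_le_mul_of_nonneg_right (sub_le_iff_le_add.mpr hc) G_pos.le)
    rw [eq_sub_of_add_eq hG]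
    nlinarith [pow_pos q_pos 2, pow_pos q_pos 3]
  have upper : c * G ≤ q ^ 5 + 2 * q ^ 4 := by
    refine (mul_le_mul_of_nonneg_right hc' G_pos.le).trans ?_
    rw [eq_sub_of_add_eq hG]
    nlinarith [pow_pos q_pos 2, pow_pos q_pos 3, pow_pos q_pos 4]
  have error : 2 * q ^ 4 < η / 4 * q ^ 5 := by nlinarith [pow_pos q_pos 4]
  have main_term : q ^ 5 / 2 ≤ c * G := by nlinarith [pow_pos q_pos 4]
  have scaled : |c * N - c * G| < c * (η * G) := by
    rw [abs_lt] at h ⊢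
    constructor <;> linarith [mul_le_mul_of_nonneg_left main_term η_pos.le]
  rw [← mul_sub, abs_mul, abs_of_pos c_pos] at scaled
  exact lt_of_mul_lt_mul_left scaled c_pos.le

variable {K : Type*} [Field K] [Fintype K] [DecidableEq K]

lemma abs_card_complexityTwoMap_eq_sub_lt (a b c d : ℤ) {g : SL(2, K)} {η : ℝ}
    (hg : tr g ^ 2 ≠ 4) (hq : 4 ≤ Fintype.card K) (hη : 8 < η * Fintype.card K)
    (h : |(#{z | tr (complexityTwoMap a b c d z) = tr g} : ℝ) - Fintype.card K ^ 5| <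
      η / 4 * Fintype.card K ^ 5) :
    |(#{z | complexityTwoMap a b c d z = g} : ℝ) - Fintype.card SL(2, K)| <
      η * Fintype.card SL(2, K) := by
  rw [card_tr_complexityTwoMap_eq a b c d hg, Nat.cast_mul] at h
  exact abs_sub_lt_of_abs_mul_sub_lt (mod_cast hq) hη (mod_cast card_specialLinearGroup_add)
    (mod_cast card_sq_le_card_tr_eq_add (tr g)) (mod_cast card_tr_eq_le (tr g)) h

lemma card_tr_mem_le (s : Finset K) :
    #{x : SL(2, K) | tr x ∈ s} ≤ #s * (Fintype.card K ^ 2 + Fintype.card K) := by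
  rw [mul_comm]
  refine Finset.card_le_mul_card_image_of_maps_to (f := tr)
    (fun x hx => (Finset.mem_filter_univ x).mp hx) _ fun τ _ => ?_
  exact (Finset.card_le_card (Finset.filter_subset_filter _ (Finset.filter_subset _ _))).trans
    (card_tr_eq_le τ)

lemma card_sq_eq_four_le : #{s : K | s ^ 2 = 4} ≤ 2 := by
  simpa [← sub_eq_add_neg, sub_eq_zero] using
    card_quadratic_le_two (B := (0 : K)) (-4) (Or.inl one_ne_zero)

lemma isEquidistributed_of_card_lt {X Y : Type*} [Fintype X] [Fintype Y] [DecidableEq Y]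
    {f : X → Y} {ε : ℝ} (E : Finset Y) (hE : #E < ε * Fintype.card Y)
    (h : ∀ y ∉ E, |(#{x | f x = y} : ℝ) - Fintype.card X / Fintype.card Y| <
      ε * Fintype.card X / Fintype.card Y) :
    IsEquidistributed f ε := by
  refine ⟨(Eᶜ : Finset Y), ?_, fun y hy => ?_⟩
  · rw [Nat.card_coe_set_eq, Set.ncard_coe_finset, Nat.card_eq_fintype_card, Finset.card_compl,
      Nat.cast_sub E.card_le_univ]
    linarith
  · simpa only [Nat.card_eq_fintype_card, Fintype.card_subtype] using
      h y (Finset.mem_compl.mp (Finset.mem_coe.mp hy))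

/-- The bound on the number of traces at which the fibres of a word `x ^ a * y ^ b * x ^ c * y ^ d`
of length `n` deviate by a factor `1 ± 2 * δ`, including the traces `2` and `-2`. -/
noncomputable def exceptionalTraceBound (n : ℕ) (δ : ℝ) : ℝ :=
  (121 + 220 * n + δ * (5 + 2 * n)) / δ ^ 2 + 2

end ElementDeviation

section Families

lemma isEquidistributed_complexityTwoMap {K : Type*} [Field K] [Fintype K] {a b c d : ℤ}
    (ha : a ≠ 0) (hb : b ≠ 0) (hc : c ≠ 0) (hd : d ≠ 0) (hne : ¬(a = c ∧ b = d)) {η : ℝ}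
    (hη : 0 < η) (hq : 4 ≤ Fintype.card K) (hηq : 8 < η * Fintype.card K)
    (hbound : exceptionalTraceBound (wordLength a b c d) (η / 8) + η < η * Fintype.card K) :
    IsEquidistributed (complexityTwoMap a b c d : SL(2, K) × SL(2, K) → SL(2, K)) η := by
  classical
  set q := Fintype.card K
  set D : Finset K := {τ | 2 * (η / 8) * q ^ 5 ≤
    |(#{z | tr (complexityTwoMap a b c d z) = τ} : ℝ) - q ^ 5|} with hD
  set E : Finset K := D ∪ Finset.univ.filter (fun τ => τ ^ 2 = 4) with hE
  have card_E : #E ≤ exceptionalTraceBound (wordLength a b c d) (η / 8) := by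
    have card_D := card_trace_deviation_mul_sq_le (K := K) ha hb hc hd hne
      (by positivity : 0 < η / 8)
    rw [← le_div_iff₀ (by positivity)] at card_D
    have card_union : (#E : ℝ) ≤ #D + 2 :=
      mod_cast (Finset.card_union_le D _).trans (Nat.add_le_add_left card_sq_eq_four_le _)
    exact card_union.trans (by rw [exceptionalTraceBound]; gcongr)
  have card_group : (Fintype.card SL(2, K) : ℝ) + q = q ^ 3 := mod_cast card_specialLinearGroup_add
  have card_group_pos : (0 : ℝ) < Fintype.card SL(2, K) := mod_cast Fintype.card_pos
  refine isEquidistributed_of_card_lt {x | tr x ∈ E} ?_ fun g hg => ?_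
  · calc (#{x : SL(2, K) | tr x ∈ E} : ℝ) ≤ #E * (q ^ 2 + q) := mod_cast card_tr_mem_le E
      _ < (η * q - η) * (q ^ 2 + q) := by
          gcongr
          linarith
      _ = η * Fintype.card SL(2, K) := by
          rw [eq_sub_of_add_eq card_group]
          ring
  · simp only [hE, hD, Finset.mem_filter_univ, Finset.mem_union, not_or, not_le] at hg
    obtain ⟨small_deviation, tr_sq_ne⟩ := hg
    rw [Fintype.card_prod, Nat.cast_mul, ← mul_assoc,
      mul_div_cancel_right₀ _ card_group_pos.ne', mul_div_cancel_right₀ _ card_group_pos.ne']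
    exact abs_card_complexityTwoMap_eq_sub_lt a b c d tr_sq_ne hq hηq
      (small_deviation.trans_eq (by ring))

lemma IsEquidistributed.mono {X Y : Type*} {f : X → Y} {ε ε' : ℝ} (h : IsEquidistributed f ε)
    (hε : ε ≤ ε') : IsEquidistributed f ε' := by
  obtain ⟨Y', card_lt, deviation⟩ := h
  refine ⟨Y', card_lt.trans_le' ?_, fun y hy => (deviation y hy).trans_le ?_⟩ <;> gcongr

lemma exists_tendsto_zero_eventually {p : ℕ → ℝ → Prop}
    (mono : ∀ m, Monotone (p m)) (h : ∀ η > 0, ∀ᶠ m in Filter.atTop, p m η) :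
    ∃ ε : ℕ → ℝ, Filter.Tendsto ε Filter.atTop (nhds 0) ∧ ∀ᶠ m in Filter.atTop, p m (ε m) := by
  let S (m : ℕ) : Set ℝ := {η | 0 < η ∧ p m η}
  have sInf_nonneg (m : ℕ) : 0 ≤ sInf (S m) := Real.sInf_nonneg fun _ hη => hη.1.le
  have bddBelow (m : ℕ) : BddBelow (S m) := ⟨0, fun _ hη => hη.1.le⟩
  have sInf_tendsto : Filter.Tendsto (fun m => sInf (S m)) Filter.atTop (nhds 0) := by
    refine tendsto_order.mpr ⟨fun η hη => .of_forall fun m => hη.trans_le (sInf_nonneg m),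
      fun η hη => (h (η / 2) (half_pos hη)).mono fun m hm => ?_⟩
    have half_mem : η / 2 ∈ S m := ⟨half_pos hη, hm⟩
    exact (csInf_le (bddBelow m) half_mem).trans_lt (half_lt_self hη)
  refine ⟨fun m => sInf (S m) + 1 / (m + 1), ?_, (h 1 one_pos).mono fun m hm => ?_⟩
  · simpa using sInf_tendsto.add tendsto_one_div_add_atTop_nhds_zero_nat
  · obtain ⟨η, hη, hlt⟩ := exists_lt_of_csInf_lt (⟨1, one_pos, hm⟩ : (S m).Nonempty)
      (lt_add_of_pos_right (sInf (S m)) (Nat.one_div_pos_of_nat (n := m)))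
    exact mono m hlt.le hη.2

lemma isEquidistributedFamily_of_forall_exists {w : FreeGroup (Fin 2)}
    (h : ∀ η > (0 : ℝ), ∃ Q : ℕ, ∀ (K : Type) [Field K] [Finite K], Q ≤ Nat.card K →
      IsEquidistributed (wordMap w K) η) : IsEquidistributedFamily w := by
  obtain ⟨ε, ε_tendsto, equidistributed⟩ := exists_tendsto_zero_eventually
    (p := fun m ε => ∀ (K : Type) [Field K] [Finite K], Nat.card K = m →
      IsEquidistributed (wordMap w K) ε)
    (fun m ε ε' hε hm K _ _ hK => (hm K hK).mono hε)
    fun η hη => by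
      obtain ⟨Q, hQ⟩ := h η hη
      exact Filter.eventually_atTop.mpr ⟨Q, fun m hm K _ _ hK => hQ K (hm.trans_eq hK.symm)⟩
  refine ⟨ε, ε_tendsto, fun p hp => ?_⟩
  have : Fact p.Prime := ⟨hp⟩
  filter_upwards [(tendsto_pow_atTop_atTop_of_one_lt hp.one_lt).eventually equidistributed,
    Filter.eventually_ne_atTop 0] with n hn n_ne_zero
  exact hn (GaloisField p n) (GaloisField.card p n n_ne_zero)

lemma wordMap_eq_complexityTwoMap (a b c d : ℤ) (K : Type) [CommRing K] :
    wordMap (FreeGroup.of (0 : Fin 2) ^ a * FreeGroup.of (1 : Fin 2) ^ b *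
      FreeGroup.of (0 : Fin 2) ^ c * FreeGroup.of (1 : Fin 2) ^ d) K =
      complexityTwoMap a b c d := by
  ext1 z
  simp [wordMap, wordEval, complexityTwoMap]

end Families

theorem complexity_two_equidistributed_or_square_general {a b c d : ℤ} (ha : a ≠ 0) (hb : b ≠ 0)
    (hc : c ≠ 0) (hd : d ≠ 0) :
    (∀ η > (0 : ℝ), ∃ Q : ℕ, ∀ (K : Type*) [Field K] [Finite K], Q ≤ Nat.card K →
      IsEquidistributed (complexityTwoMap a b c d : SL(2, K) × SL(2, K) → SL(2, K)) η) ∨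
      (a = c ∧ b = d) := by
  refine or_iff_not_imp_right.mpr fun hne η hη => ?_
  have large := (tendsto_natCast_atTop_atTop (R := ℝ)).const_mul_atTop hη
  obtain ⟨Q, hQ⟩ := Filter.eventually_atTop.mp <| (Filter.eventually_ge_atTop 4).and <|
    (large.eventually_gt_atTop 8).and <|
      large.eventually_gt_atTop (exceptionalTraceBound (wordLength a b c d) (η / 8) + η)
  refine ⟨Q, fun K _ _ hK => ?_⟩
  have := Fintype.ofFinite K
  rw [Nat.card_eq_fintype_card] at hK
  obtain ⟨four_le, eight_lt, bound_lt⟩ := hQ _ hK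
  exact isEquidistributed_complexityTwoMap ha hb hc hd hne hη four_le eight_lt bound_lt

theorem complexity_two_equidistributed_or_square (a b c d : ℤ)
    (ha : a ≠ 0) (hb : b ≠ 0) (hc : c ≠ 0) (hd : d ≠ 0) :
    IsEquidistributedFamily
      (FreeGroup.of (0 : Fin 2) ^ a * FreeGroup.of (1 : Fin 2) ^ b *
        FreeGroup.of (0 : Fin 2) ^ c * FreeGroup.of (1 : Fin 2) ^ d) ∨
      (a = c ∧ b = d) := by
  refine (complexity_two_equidistributed_or_square_general.{0} ha hb hc hd).imp_left fun h => ?_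
  simp only [← wordMap_eq_complexityTwoMap] at h
  exact isEquidistributedFamily_of_forall_exists h
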